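/- arXiv:1209.1443 — 7 statements merged into one kernel-verified Lean document; each statement's English description precedes it below -/
import Mathlib

section
/- There exists a positive integer N such that for every odd integer n ≥ N and every integer m ≥ 2 the following holds. Let a₁, a₂ be two of the free generators of the free Burnside group B(m,n), let c := a₁a₂a₁⁻¹a₂⁻¹, and set A := (1 + c + ⋯ + c^{n-1})(1 − a₁a₂a₁⁻¹) and B := (1 − a₁)(1 + a₂ + ⋯ + a₂^{n-1}) in ℤ[B(m,n)]. Then A ≠ 0, B ≠ 0, AB = 0, and the pair (A, B) is a nontrivial pair of zero-divisors in ℤ[B(m,n)]. -/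
/-!
The argument works for every odd `n ≥ 3`. Write `a = a₁`, `b = a₂`, `d = a b a⁻¹`, `c = d b⁻¹`, and
let `C`, `E` be the sums of the powers of `c` and of `b`. The product vanishes because `C c = C`
and `b E = E`, while `d = c b` and `d a = a b`.

The only information needed about `B(m, n)` is that it maps onto the Heisenberg group over `ℤ/n`,
which has exponent `n` for odd `n`. Comparing supports of sums of group elements then gives
everything else.
* `A = 0` would force `d ∈ ⟨c⟩`, and `B = 0` would force `a ∈ ⟨b⟩`; both fail in the
  abelianization.
* If `A = X(1 - h)` and `B = (1 + ⋯ + h^(q-1))Y`, then `(1 - h)B = 0`, i.e.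
  `E + h a E = h E + a E`. Hence `h` lies in `⟨b⟩` and in `a⟨b⟩a⁻¹`, which meet trivially by a
  computation in the Heisenberg group; so `h = 1`.
* If `A = X(1 + ⋯ + h^(q-1))` and `B = (1 - h)Y`, then `A(1 - h) = 0` forces `h ∈ ⟨c⟩`, so `h` is
  trivial in the abelianization; and `(1 + ⋯ + h^(q-1))B = 0` forces `a ∈ ⟨h⟩⟨b⟩`, which is
  impossible there.
-/

open MonoidAlgebra

/-- The free Burnside group `B(m, n)`: the quotient of the free group of rank `m` by the
normal subgroup generated by all `n`-th powers. -/
abbrev FreeBurnsideGroup (m n : ℕ) : Type :=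
  FreeGroup (Fin m) ⧸ Subgroup.normalClosure {x : FreeGroup (Fin m) | ∃ y, y ^ n = x}

/-- The free generators of `B(m, n)`: images of the free generators of the free group. -/
def FreeBurnsideGroup.gen (m n : ℕ) (i : Fin m) : FreeBurnsideGroup m n :=
  QuotientGroup.mk (FreeGroup.of i)

/-- `A, B` is a trivial pair of zero-divisors in `ℤ[G]`: there are `X, Y ∈ ℤ[G]` and
`h ∈ G` of finite order `q > 1` such that either `A = X(1-h)`, `B = (1+h+⋯+h^{q-1})Y`,
or `A = X(1+h+⋯+h^{q-1})`, `B = (1-h)Y`. -/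
def IsTrivialPairOfZeroDivisors {G : Type*} [Group G] (A B : MonoidAlgebra ℤ G) : Prop :=
  ∃ (X Y : MonoidAlgebra ℤ G) (h : G) (q : ℕ), 1 < q ∧ orderOf h = q ∧
    ((A = X * (1 - of ℤ G h) ∧ B = (∑ i ∈ Finset.range q, of ℤ G h ^ i) * Y) ∨
     (A = X * (∑ i ∈ Finset.range q, of ℤ G h ^ i) ∧ B = (1 - of ℤ G h) * Y))

/-- The Heisenberg group over `ℤ/n`: the triple `(x, y, z)` stands for the upper unitriangular
matrix with entries `x`, `y` above the diagonal and `z` in the corner. -/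
@[ext]
structure HeisenbergMod (n : ℕ) where
  x : ZMod n
  y : ZMod n
  z : ZMod n

namespace HeisenbergMod

variable {n : ℕ}

instance : Mul (HeisenbergMod n) := ⟨fun g h => ⟨g.x + h.x, g.y + h.y, g.z + h.z + g.x * h.y⟩⟩
instance : One (HeisenbergMod n) := ⟨⟨0, 0, 0⟩⟩
instance : Inv (HeisenbergMod n) := ⟨fun g => ⟨-g.x, -g.y, -g.z + g.x * g.y⟩⟩

@[simp] lemma mul_x (g h : HeisenbergMod n) : (g * h).x = g.x + h.x := rfl
@[simp] lemma mul_y (g h : HeisenbergMod n) : (g * h).y = g.y + h.y := rfl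
@[simp] lemma mul_z (g h : HeisenbergMod n) : (g * h).z = g.z + h.z + g.x * h.y := rfl
@[simp] lemma one_x : (1 : HeisenbergMod n).x = 0 := rfl
@[simp] lemma one_y : (1 : HeisenbergMod n).y = 0 := rfl
@[simp] lemma one_z : (1 : HeisenbergMod n).z = 0 := rfl
@[simp] lemma inv_x (g : HeisenbergMod n) : (g⁻¹).x = -g.x := rfl
@[simp] lemma inv_y (g : HeisenbergMod n) : (g⁻¹).y = -g.y := rfl
@[simp] lemma inv_z (g : HeisenbergMod n) : (g⁻¹).z = -g.z + g.x * g.y := rfl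

instance : Group (HeisenbergMod n) :=
  Group.ofLeftAxioms
    (fun a b c => by ext <;> simp <;> ring)
    (fun a => by ext <;> simp)
    (fun a => by ext <;> simp)

@[simp] lemma pow_x (g : HeisenbergMod n) (k : ℕ) : (g ^ k).x = k * g.x := by
  induction k with
  | zero => simp
  | succ k ih => rw [pow_succ, mul_x, ih]; push_cast; ring

@[simp] lemma pow_y (g : HeisenbergMod n) (k : ℕ) : (g ^ k).y = k * g.y := by
  induction k with
  | zero => simp
  | succ k ih => rw [pow_succ, mul_y, ih]; push_cast; ring

@[simp] lemma pow_z (g : HeisenbergMod n) (k : ℕ) :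
    (g ^ k).z = k * g.z + k.choose 2 * (g.x * g.y) := by
  induction k with
  | zero => simp
  | succ k ih =>
    rw [pow_succ, mul_z, ih, pow_x, Nat.choose_succ_succ' k 1, Nat.choose_one_right]
    push_cast
    ring

lemma pow_eq_one_of_odd (hn : Odd n) (g : HeisenbergMod n) : g ^ n = 1 := by
  have hc : ((n.choose 2 : ℕ) : ZMod n) = 0 := by
    obtain ⟨k, rfl⟩ := hn
    rw [ZMod.natCast_eq_zero_iff, Nat.choose_two_right]
    refine ⟨k, ?_⟩
    rw [Nat.add_sub_cancel, mul_left_comm, Nat.mul_div_cancel_left _ two_pos]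
  ext <;> simp [hc]

end HeisenbergMod

namespace FreeBurnsideGroup

lemma pow_eq_one {m n : ℕ} (g : FreeBurnsideGroup m n) : g ^ n = 1 := by
  induction g using QuotientGroup.induction_on with
  | H y =>
    rw [← QuotientGroup.mk_pow, QuotientGroup.eq_one_iff]
    exact Subgroup.subset_normalClosure ⟨y, rfl⟩

/-- Universal property of `B(m, n)`. -/
lemma exists_hom {m n : ℕ} {K : Type*} [Group K] (hK : ∀ g : K, g ^ n = 1) (f : Fin m → K) :
    ∃ φ : FreeBurnsideGroup m n →* K, ∀ i, φ (gen m n i) = f i := by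
  refine ⟨QuotientGroup.lift _ (FreeGroup.lift f) ?_, fun i => ?_⟩
  · refine Subgroup.normalClosure_le_normal (N := (FreeGroup.lift f).ker) ?_
    rintro _ ⟨y, rfl⟩
    simp [MonoidHom.mem_ker, hK]
  · simp [gen]

end FreeBurnsideGroup

section GroupRing

variable {G : Type*} [Group G]

/-- Sums of group elements have nonnegative coefficients, so no cancellation occurs and the support
of such a sum consists of all its terms. -/
lemma exists_eq_of_sum_of_eq {ι κ : Type*} {s : Finset ι} {t : Finset κ} {f : ι → G} {g : κ → G}
    (h : ∑ i ∈ s, of ℤ G (f i) = ∑ j ∈ t, of ℤ G (g j)) {i : ι} (hi : i ∈ s) :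
    ∃ j ∈ t, f i = g j := by
  classical
  by_contra! hne
  have h1 := congrArg (fun P : MonoidAlgebra ℤ G => P.coeff (f i)) h
  simp only [of_apply, coeff_sum, coeff_single, Finsupp.finsetSum_apply,
    Finsupp.single_apply] at h1
  rw [Finset.sum_eq_zero (s := t) (fun j hj => if_neg fun e => hne j hj e.symm)] at h1
  have h2 := (Finset.sum_eq_zero_iff_of_nonneg (fun k _ => by split_ifs <;> simp)).1 h1 i hi
  simp at h2

/-- The case of two sums on either side. -/
lemma exists_eq_of_sum_add_sum_of_eq {n : ℕ} {f f' g g' : ℕ → G}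
    (h : ∑ i ∈ Finset.range n, of ℤ G (f i) + ∑ i ∈ Finset.range n, of ℤ G (f' i) =
      ∑ i ∈ Finset.range n, of ℤ G (g i) + ∑ i ∈ Finset.range n, of ℤ G (g' i))
    {i : ℕ} (hi : i < n) : (∃ j, f i = g j) ∨ ∃ j, f i = g' j := by
  have h' : ∑ k ∈ (Finset.range n).disjSum (Finset.range n), of ℤ G (Sum.elim f f' k) =
      ∑ k ∈ (Finset.range n).disjSum (Finset.range n), of ℤ G (Sum.elim g g' k) := by
    simpa only [Finset.sum_disjSum, Sum.elim_inl, Sum.elim_inr] using h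
  obtain ⟨j | j, -, hj⟩ := exists_eq_of_sum_of_eq h'
    (Finset.inl_mem_disjSum.2 (Finset.mem_range.2 hi))
  · exact Or.inl ⟨j, hj⟩
  · exact Or.inr ⟨j, hj⟩

/-- The product vanishes in any group in which `b` and the commutator `c` have exponent `n`. -/
lemma mul_eq_zero_of_pow_eq_one {n : ℕ} {a b c : G} (hc : c = a * b * a⁻¹ * b⁻¹)
    (hbn : b ^ n = 1) (hcn : c ^ n = 1) :
    ((∑ i ∈ Finset.range n, of ℤ G c ^ i) * (1 - of ℤ G (a * b * a⁻¹))) *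
      ((1 - of ℤ G a) * ∑ i ∈ Finset.range n, of ℤ G b ^ i) = 0 := by
  have hE : of ℤ G b * ∑ i ∈ Finset.range n, of ℤ G b ^ i =
      ∑ i ∈ Finset.range n, of ℤ G b ^ i := by
    have := mul_neg_geom_sum (of ℤ G b) n
    rw [← map_pow, hbn, map_one, sub_self, sub_mul, one_mul, sub_eq_zero] at this
    exact this.symm
  have hC : (∑ i ∈ Finset.range n, of ℤ G c ^ i) * of ℤ G c =
      ∑ i ∈ Finset.range n, of ℤ G c ^ i := by
    have := geom_sum_mul_neg (of ℤ G c) n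
    rw [← map_pow, hcn, map_one, sub_self, mul_sub, mul_one, sub_eq_zero] at this
    exact this.symm
  generalize (∑ i ∈ Finset.range n, of ℤ G b ^ i) = E at *
  generalize (∑ i ∈ Finset.range n, of ℤ G c ^ i) = C at *
  have e1 : a * b * a⁻¹ = c * b := by rw [hc]; group
  have e2 : c * b * a = a * b := by rw [hc]; group
  have h1 : C * (of ℤ G (c * b) * E) = C * E := by
    rw [map_mul, mul_assoc, hE, ← mul_assoc, hC]
  have h2 : of ℤ G (c * b) * (of ℤ G a * E) = of ℤ G a * E := by
    rw [← mul_assoc, ← map_mul, e2, map_mul, mul_assoc, hE]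
  rw [e1, mul_assoc, sub_mul 1 (of ℤ G a), one_mul, sub_mul, one_mul, mul_sub (of ℤ G (c * b)), h2,
    mul_sub, mul_sub, mul_sub, h1, sub_self]

variable {n : ℕ} {a b c : G} (φ : G →* HeisenbergMod n)

/-- A homomorphism to the Heisenberg group sending `a`, `b` to its standard generators rules out
that `A` or `B` vanishes and that the pair is trivial. -/
lemma nontrivial_pair_of_hom (hn : 2 ≤ n) (hc : c = a * b * a⁻¹ * b⁻¹) (hbn : b ^ n = 1)
    (ha : φ a = ⟨1, 0, 0⟩) (hb : φ b = ⟨0, 1, 0⟩) :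
    (∑ i ∈ Finset.range n, of ℤ G c ^ i) * (1 - of ℤ G (a * b * a⁻¹)) ≠ 0 ∧
    (1 - of ℤ G a) * (∑ i ∈ Finset.range n, of ℤ G b ^ i) ≠ 0 ∧
    ¬ IsTrivialPairOfZeroDivisors
      ((∑ i ∈ Finset.range n, of ℤ G c ^ i) * (1 - of ℤ G (a * b * a⁻¹)))
      ((1 - of ℤ G a) * (∑ i ∈ Finset.range n, of ℤ G b ^ i)) := by
  have : Fact (1 < n) := ⟨hn⟩
  have n0 : 0 < n := by omega
  -- the abelianization separates `d` from the powers of `c`, and `a` from those of `b`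
  have hdC (i : ℕ) : 1 ≠ c ^ i * (a * b * a⁻¹) := fun e => by
    simpa [hc, ha, hb] using congrArg (fun g => (φ g).y) e
  have haE (i j : ℕ) : b ^ i ≠ a * b ^ j := fun e => by
    simpa [ha, hb] using congrArg (fun g => (φ g).x) e
  refine ⟨fun hA => ?_, fun hB => ?_, ?_⟩
  · simp only [mul_sub, mul_one, sub_eq_zero, Finset.sum_mul, ← map_pow, ← map_mul] at hA
    obtain ⟨j, -, hj⟩ := exists_eq_of_sum_of_eq hA (Finset.mem_range.2 n0)
    exact hdC j (by simpa using hj)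
  · simp only [sub_mul, one_mul, sub_eq_zero, Finset.mul_sum, Finset.sum_sub_distrib, ← map_pow,
      ← map_mul] at hB
    obtain ⟨j, -, hj⟩ := exists_eq_of_sum_of_eq hB (Finset.mem_range.2 n0)
    exact haE 0 j hj
  rintro ⟨X, Y, h, q, hq, hord, ⟨-, hB⟩ | ⟨hA, hB⟩⟩
  · have hhB : (1 - of ℤ G h) * ((1 - of ℤ G a) * ∑ i ∈ Finset.range n, of ℤ G b ^ i) = 0 := by
      rw [hB, ← mul_assoc, mul_neg_geom_sum, ← map_pow, ← hord, pow_orderOf_eq_one, map_one,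
        sub_self, zero_mul]
    simp only [sub_mul, one_mul, mul_sub, Finset.mul_sum, Finset.sum_sub_distrib, ← map_pow,
      ← map_mul] at hhB
    have key1 : ∑ i ∈ Finset.range n, of ℤ G (b ^ i) +
        ∑ i ∈ Finset.range n, of ℤ G (h * (a * b ^ i)) =
        ∑ i ∈ Finset.range n, of ℤ G (h * b ^ i) + ∑ i ∈ Finset.range n, of ℤ G (a * b ^ i) := by
      rw [← sub_eq_zero, ← hhB]; abel
    have key2 := (add_comm _ _).trans key1
    obtain ⟨i, hi⟩ : ∃ i, 1 = h * b ^ i := by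
      rcases exists_eq_of_sum_add_sum_of_eq key1 n0 with ⟨j, hj⟩ | ⟨j, hj⟩
      · exact ⟨j, by simpa using hj⟩
      · exact absurd hj (haE 0 j)
    obtain ⟨j, hj⟩ : ∃ j, h * a = a * b ^ j := by
      rcases exists_eq_of_sum_add_sum_of_eq key2 n0 with ⟨j, hj⟩ | ⟨j, hj⟩
      · exact absurd (by simpa using hj.symm) (haE j 0)
      · exact ⟨j, by simpa using hj⟩
    have hh : h = (b ^ i)⁻¹ := eq_inv_of_mul_eq_one_left hi.symm
    rw [hh] at hj
    have hy := congrArg (fun g => (φ g).y) hj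
    have hz := congrArg (fun g => (φ g).z) hj
    simp [ha, hb] at hy hz
    rw [← hz, neg_eq_zero, ZMod.natCast_eq_zero_iff] at hy
    obtain ⟨k, rfl⟩ := hy
    rw [pow_mul, hbn, one_pow, inv_one] at hh
    rw [hh, orderOf_one] at hord
    omega
  · have hqh : h ^ q = 1 := hord ▸ pow_orderOf_eq_one h
    have hAh : ((∑ i ∈ Finset.range n, of ℤ G c ^ i) * (1 - of ℤ G (a * b * a⁻¹))) *
        (1 - of ℤ G h) = 0 := by
      rw [hA, mul_assoc, geom_sum_mul_neg, ← map_pow, hqh, map_one, sub_self, mul_zero]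
    have hhB : (∑ i ∈ Finset.range q, of ℤ G h ^ i) *
        ((1 - of ℤ G a) * ∑ i ∈ Finset.range n, of ℤ G b ^ i) = 0 := by
      rw [hB, ← mul_assoc, geom_sum_mul_neg, ← map_pow, hqh, map_one, sub_self, zero_mul]
    have key : ∑ i ∈ Finset.range n, of ℤ G (c ^ i) +
        ∑ i ∈ Finset.range n, of ℤ G (c ^ i * (a * b * a⁻¹) * h) =
        ∑ i ∈ Finset.range n, of ℤ G (c ^ i * (a * b * a⁻¹)) +
        ∑ i ∈ Finset.range n, of ℤ G (c ^ i * h) := by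
      rw [← sub_eq_zero, ← hAh]
      simp only [map_mul _ _ h, map_mul _ (_ ^ _) _, map_pow, ← Finset.sum_mul]
      noncomm_ring
    obtain ⟨i, hi⟩ : ∃ i, 1 = c ^ i * h := by
      rcases exists_eq_of_sum_add_sum_of_eq key n0 with ⟨j, hj⟩ | ⟨j, hj⟩
      · exact absurd (by simpa using hj) (hdC j)
      · exact ⟨j, by simpa using hj⟩
    have hx : (φ h).x = 0 := by
      simpa [hc, ha, hb] using (congrArg (fun g => (φ g).x) hi).symm
    rw [sub_mul, one_mul, mul_sub, sub_eq_zero] at hhB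
    simp only [Finset.mul_sum, Finset.sum_mul, ← map_pow, ← map_mul] at hhB
    rw [← Finset.sum_product', ← Finset.sum_product'] at hhB
    obtain ⟨⟨k, l⟩, -, hkl⟩ := exists_eq_of_sum_of_eq hhB
      (i := (0, 0)) (Finset.mk_mem_product (Finset.mem_range.2 n0) (Finset.mem_range.2 (by omega)))
    simpa [ha, hb, hx] using congrArg (fun g => (φ g).x) hkl

end GroupRing

/-- Theorem 1: there is `N > 0` such that for all odd `n ≥ N` and `m ≥ 2`,
with `a₁, a₂` free generators of `B(m,n)` and `c := a₁a₂a₁⁻¹a₂⁻¹`, the elements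
`A := (1 + c + ⋯ + c^{n-1})(1 - a₁a₂a₁⁻¹)` and `B := (1 - a₁)(1 + a₂ + ⋯ + a₂^{n-1})`
form a nontrivial pair of zero-divisors in `ℤ[B(m,n)]`. -/
theorem burnside_nontrivial_pair_of_zero_divisors :
    ∃ N : ℕ, 0 < N ∧ ∀ (n m : ℕ), N ≤ n → Odd n → ∀ (hm : 2 ≤ m),
      let a₁ : FreeBurnsideGroup m n := FreeBurnsideGroup.gen m n ⟨0, by omega⟩
      let a₂ : FreeBurnsideGroup m n := FreeBurnsideGroup.gen m n ⟨1, by omega⟩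
      let c : FreeBurnsideGroup m n := a₁ * a₂ * a₁⁻¹ * a₂⁻¹
      let A : MonoidAlgebra ℤ (FreeBurnsideGroup m n) :=
        (∑ i ∈ Finset.range n, of ℤ (FreeBurnsideGroup m n) c ^ i) *
          (1 - of ℤ (FreeBurnsideGroup m n) (a₁ * a₂ * a₁⁻¹))
      let B : MonoidAlgebra ℤ (FreeBurnsideGroup m n) :=
        (1 - of ℤ (FreeBurnsideGroup m n) a₁) *
          (∑ i ∈ Finset.range n, of ℤ (FreeBurnsideGroup m n) a₂ ^ i)
      A ≠ 0 ∧ B ≠ 0 ∧ A * B = 0 ∧ ¬ IsTrivialPairOfZeroDivisors A B := by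
  refine ⟨3, by norm_num, fun n m hN hodd hm => ?_⟩
  intro a₁ a₂ c A B
  obtain ⟨φ, hφ⟩ := FreeBurnsideGroup.exists_hom (m := m)
    (HeisenbergMod.pow_eq_one_of_odd hodd)
    (fun i => if i.val = 0 then ⟨1, 0, 0⟩ else if i.val = 1 then ⟨0, 1, 0⟩ else 1)
  obtain ⟨hA, hB, hAB⟩ := nontrivial_pair_of_hom φ (a := a₁) (b := a₂) (c := c) (by omega) rfl
    (FreeBurnsideGroup.pow_eq_one _) ((hφ _).trans (by simp)) ((hφ _).trans (by simp))
  exact ⟨hA, hB, mul_eq_zero_of_pow_eq_one rfl (FreeBurnsideGroup.pow_eq_one _)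
    (FreeBurnsideGroup.pow_eq_one _), hAB⟩
end

section
/- Let G be a group that contains a subgroup isomorphic either to a finite noncyclic group, or to the free product C_q * C_r of cyclic groups of orders q and r (each possibly infinite) with 1 < min(q, r) < ∞. Then the integral group ring ℤ[G] contains a nontrivial pair of zero-divisors, i.e., there exist A, B ∈ ℤ[G] with A ≠ 0, B ≠ 0, AB = 0 such that (A, B) is not a trivial pair of zero-divisors. -/
/-!
For a finite subgroup `H` write `N_H` for the sum of its elements in `ℤ[G]`, and for `a` of finite
order write `N_a` for the sum of the powers of `a`. Let `ε : ℤ[G] → ℤ` be the augmentation.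

*Finite noncyclic `H`.* The pair is `A = N_H`, `B = |H| - N_H`. As `ε(A) = |H| ≠ 0`, the element `A`
is not of the form `X(1 - h)`. If `A = X N_h` and `B = (1 - h) Y`, then `A h = A` forces `h ∈ H`,
and `N_h B = 0` reads `|H| N_h = |h| N_H`. This is absurd at an element of `H` outside `⟨h⟩`, which
exists because `H` is not cyclic.

*Free products.* Let `a` be a generator of a finite factor, of order `q`, and `b ≠ 1` an element of
the other factor. Then `⟨a⟩ ∩ b⟨a⟩b⁻¹ = 1`, as one sees from an explicit action of the free product
on the product of the two factors. The element `t = (1 - a) b N_a` has square zero, so `1 + t` is a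
unit with inverse `1 - t`; twisting the trivial pair `(1 - a, N_a)` by it gives
`A = (1 - a)(1 - t)`, `B = (1 + t) N_a = N_a + q b N_a - q a b N_a`.
As `ε(B) = q ≠ 0`, `B` is not of the form `(1 - h) Y`. If `B = N_h Y`, then `h B = B`. The
coefficients of `B` on the cosets `⟨a⟩`, `b⟨a⟩`, `ab⟨a⟩` are the distinct numbers `1`, `q`, `-q`, so
`h` fixes `⟨a⟩` and `b⟨a⟩`, that is `h ∈ ⟨a⟩ ∩ b⟨a⟩b⁻¹ = 1`.
-/

open MonoidAlgebra

section Helpers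

variable {G : Type*} [Group G]

/-- The sum `1 + h + ⋯ + h^(q-1)` in `ℤ[G]`, where `q` is the order of `h`; it is `0` if `h` has
infinite order. -/
noncomputable def cycSum (h : G) : MonoidAlgebra ℤ G :=
  ∑ i ∈ Finset.range (orderOf h), of ℤ G h ^ i

/-- The augmentation `ℤ[G] → ℤ`, the sum of the coefficients. -/
noncomputable def augm (G : Type*) [Group G] : MonoidAlgebra ℤ G →ₐ[ℤ] ℤ :=
  MonoidAlgebra.lift ℤ ℤ G 1

@[simp] lemma augm_of (g : G) : augm G (of ℤ G g) = 1 := by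
  simp [augm]

lemma augm_cycSum (h : G) : augm G (cycSum h) = orderOf h := by
  simp [cycSum, -of_apply]

lemma one_sub_mul_cycSum (h : G) : (1 - of ℤ G h) * cycSum h = 0 := by
  rw [cycSum, mul_neg_geom_sum, ← map_pow, pow_orderOf_eq_one, map_one, sub_self]

lemma cycSum_mul_one_sub (h : G) : cycSum h * (1 - of ℤ G h) = 0 := by
  rw [cycSum, geom_sum_mul_neg, ← map_pow, pow_orderOf_eq_one, map_one, sub_self]

lemma of_mul_cycSum (h : G) : of ℤ G h * cycSum h = cycSum h := by
  have := one_sub_mul_cycSum h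
  rw [sub_mul, one_mul, sub_eq_zero] at this
  exact this.symm

lemma cycSum_mul_of (h : G) : cycSum h * of ℤ G h = cycSum h := by
  have := cycSum_mul_one_sub h
  rw [mul_sub, mul_one, sub_eq_zero] at this
  exact this.symm

/-- If left multiplication by `h` fixes `Z`, then left multiplication by `cycSum h` multiplies `Z`
by the order of `h`. -/
lemma cycSum_mul_of_fixed {h : G} {Z : MonoidAlgebra ℤ G} (hZ : of ℤ G h * Z = Z) :
    cycSum h * Z = (orderOf h : ℤ) • Z := by
  have key : ∀ i : ℕ, of ℤ G h ^ i * Z = Z := by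
    intro i
    induction i with
    | zero => simp
    | succ n ih => rw [pow_succ, mul_assoc, hZ, ih]
  rw [cycSum, Finset.sum_mul, Finset.sum_congr rfl fun i _ => key i]
  simp

open Classical in
lemma coeff_cycSum {h : G} (hh : 0 < orderOf h) (g : G) :
    (cycSum h).coeff g = if g ∈ Subgroup.zpowers h then 1 else 0 := by
  have hfin : IsOfFinOrder h := orderOf_pos_iff.mp hh
  have hinj : Set.InjOn (fun i : ℕ => h ^ i) (Finset.range (orderOf h)) := by
    intro i hi j hj hij
    exact pow_injOn_Iio_orderOf (by simpa using hi) (by simpa using hj) hij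
  have himg : cycSum h = ∑ x ∈ (Finset.range (orderOf h)).image (fun i : ℕ => h ^ i),
      of ℤ G x := by
    rw [Finset.sum_image hinj, cycSum]
    simp only [map_pow]
  have hmem : g ∈ (Finset.range (orderOf h)).image (fun i : ℕ => h ^ i) ↔
      g ∈ Subgroup.zpowers h := by
    rw [← hfin.mem_powers_iff_mem_zpowers, hfin.mem_powers_iff_mem_range_orderOf]
  rw [himg, coeff_sum, Finsupp.finsetSum_apply]
  simp only [of_apply, coeff_single, Finsupp.single_apply]
  rw [Finset.sum_ite_eq']
  simp only [hmem]

lemma coeff_of_mul (x g : G) (Z : MonoidAlgebra ℤ G) :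
    (of ℤ G x * Z).coeff g = Z.coeff (x⁻¹ * g) := by
  simp [of_apply]

lemma coeff_mul_of (x g : G) (Z : MonoidAlgebra ℤ G) :
    (Z * of ℤ G x).coeff g = Z.coeff (g * x⁻¹) := by
  simp [of_apply]

/-! ### Finite noncyclic subgroups -/

/-- The sum in `ℤ[G]` of the elements of a finite subgroup `H`. -/
noncomputable def subSum (H : Subgroup G) [Fintype H] : MonoidAlgebra ℤ G :=
  ∑ x : H, of ℤ G (x : G)

open Classical in
lemma coeff_subSum (H : Subgroup G) [Fintype H] (g : G) :
    (subSum H).coeff g = if g ∈ H then 1 else 0 := by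
  rw [subSum, coeff_sum, Finsupp.finsetSum_apply]
  simp only [of_apply, coeff_single, Finsupp.single_apply]
  split_ifs with hg
  · rw [Finset.sum_eq_single ⟨g, hg⟩]
    · simp
    · intro x _ hx
      rw [if_neg]
      exact fun h => hx (Subtype.ext h)
    · simp
  · refine Finset.sum_eq_zero fun x _ => if_neg ?_
    rintro rfl
    exact hg x.2

lemma of_mul_subSum {H : Subgroup G} [Fintype H] {h : G} (hh : h ∈ H) :
    of ℤ G h * subSum H = subSum H := by
  ext g
  classical
  rw [coeff_of_mul, coeff_subSum, coeff_subSum]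
  simp only [H.mul_mem_cancel_left (H.inv_mem hh)]

lemma augm_subSum (H : Subgroup G) [Fintype H] : augm G (subSum H) = Fintype.card H := by
  simp [subSum, -of_apply]

lemma subSum_mul_subSum (H : Subgroup G) [Fintype H] :
    subSum H * subSum H = (Fintype.card H : ℤ) • subSum H := by
  conv_lhs => enter [1]; rw [subSum]
  rw [Finset.sum_mul, Finset.sum_congr rfl fun x _ => of_mul_subSum x.2]
  simp

lemma exists_nontrivial_of_finite_noncyclic (H : Subgroup G) [Finite H] (hH : ¬ IsCyclic H) :
    ∃ A B : MonoidAlgebra ℤ G, A ≠ 0 ∧ B ≠ 0 ∧ A * B = 0 ∧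
      ¬ IsTrivialPairOfZeroDivisors A B := by
  classical
  have := Fintype.ofFinite H
  have hcard : (Fintype.card H : ℤ) ≠ 0 := by exact_mod_cast Fintype.card_ne_zero
  -- No element of `H` generates it.
  have hgen : ∀ h ∈ H, ∃ g ∈ H, g ∉ Subgroup.zpowers h := by
    intro h hh
    by_contra! hall
    refine hH ⟨⟨h, hh⟩, fun x => ?_⟩
    obtain ⟨k, hk⟩ := Subgroup.mem_zpowers_iff.mp (hall x x.2)
    exact ⟨k, Subtype.ext (by simpa using hk)⟩
  refine ⟨subSum H, (Fintype.card H : ℤ) • 1 - subSum H, ?_, ?_, ?_, ?_⟩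
  · intro h0
    have := augm_subSum H
    rw [h0, map_zero] at this
    exact hcard this.symm
  · intro h0
    obtain ⟨g, hg, hg1⟩ := hgen 1 H.one_mem
    have hg1' : (1 : G) ≠ g := fun h => hg1 (h ▸ Subgroup.one_mem _)
    have := congrArg (fun Z => Z.coeff g) h0
    simp [coeff_subSum, hg, one_def, hg1'] at this
  · rw [mul_sub, mul_smul_comm, mul_one, subSum_mul_subSum, sub_self]
  · rintro ⟨X, Y, h, q, hq, rfl, ⟨hA, -⟩ | ⟨hA, hB⟩⟩
    · have := augm_subSum H
      rw [hA, map_mul, map_sub, map_one, augm_of, sub_self, mul_zero] at this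
      exact hcard this.symm
    · change _ = X * cycSum h at hA
      have hhH : h ∈ H := by
        have h1 : subSum H * of ℤ G h = subSum H := by
          rw [hA, mul_assoc, cycSum_mul_of]
        have h2 := congrArg (fun Z => Z.coeff h) h1
        simp only [coeff_mul_of, mul_inv_cancel, coeff_subSum, H.one_mem, if_true] at h2
        by_contra hn
        simp [hn] at h2
      have h3 : cycSum h * ((Fintype.card H : ℤ) • 1 - subSum H) = 0 := by
        rw [hB, ← mul_assoc, cycSum_mul_one_sub, zero_mul]
      rw [mul_sub, mul_smul_comm, mul_one, cycSum_mul_of_fixed (of_mul_subSum hhH)] at h3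
      obtain ⟨g, hg, hgh⟩ := hgen h hhH
      have h4 := congrArg (fun Z => Z.coeff g) h3
      simp only [coeff_sub, coeff_smul, Finsupp.sub_apply, Finsupp.smul_apply, coeff_zero,
        coeff_cycSum (zero_lt_one.trans hq), coeff_subSum, hg, hgh, if_true, if_false,
        smul_eq_mul, Finsupp.zero_apply] at h4
      omega

/-! ### Free products -/

/-- The twisted pair `(1 - a)(1 - t)`, `(1 + t) N_a` with `t = (1 - a) b N_a`. The hypothesis `hab`
says that `⟨a⟩ ∩ b⟨a⟩b⁻¹` is trivial. -/
lemma exists_nontrivial_of_malnormal (a b : G) (hq : 1 < orderOf a)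
    (hab : ∀ x ∈ Subgroup.zpowers a, ∀ y ∈ Subgroup.zpowers a, x * b = b * y → x = 1) :
    ∃ A B : MonoidAlgebra ℤ G, A ≠ 0 ∧ B ≠ 0 ∧ A * B = 0 ∧
      ¬ IsTrivialPairOfZeroDivisors A B := by
  classical
  have hq0 : 0 < orderOf a := zero_lt_one.trans hq
  have ha1 : a ≠ 1 := fun h => by simp [h] at hq
  have haC : a ∈ Subgroup.zpowers a := Subgroup.mem_zpowers a
  have hbC : b ∉ Subgroup.zpowers a := fun hb =>
    ha1 (hab a haC (b⁻¹ * a * b)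
      (Subgroup.mul_mem _ (Subgroup.mul_mem _ (Subgroup.inv_mem _ hb) haC) hb) (by group))
  have hbab : b⁻¹ * a⁻¹ * b ∉ Subgroup.zpowers a := fun h =>
    ha1 (inv_eq_one.mp (hab a⁻¹ (Subgroup.inv_mem _ haC) _ h (by group)))
  have hba : b⁻¹ * a⁻¹ ∉ Subgroup.zpowers a := fun h => hbC <| by
    rw [Subgroup.mul_mem_cancel_right _ (Subgroup.inv_mem _ haC)] at h
    exact (Subgroup.inv_mem_iff _).mp h
  set N := cycSum a with hN
  set t := (1 - of ℤ G a) * of ℤ G b * N with ht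
  have htt : t * t = 0 := by
    calc t * t = (1 - of ℤ G a) * of ℤ G b * (N * (1 - of ℤ G a)) * (of ℤ G b * N) := by
          rw [ht]; noncomm_ring
      _ = 0 := by rw [hN, cycSum_mul_one_sub, mul_zero, zero_mul]
  have hinv : (1 - t) * (1 + t) = 1 := by
    have : (1 - t) * (1 + t) = 1 - t * t := by noncomm_ring
    rw [this, htt, sub_zero]
  have hNN : N * N = (orderOf a : ℤ) • N := cycSum_mul_of_fixed (of_mul_cycSum a)
  have hBexp : (1 + t) * N = N + (orderOf a : ℤ) • (of ℤ G b * N)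
      - (orderOf a : ℤ) • (of ℤ G (a * b) * N) := by
    rw [add_mul, one_mul, ht, mul_assoc _ N N, hNN, mul_smul_comm, sub_mul, one_mul, sub_mul,
      smul_sub, map_mul, add_sub_assoc]
  have haug : augm G ((1 + t) * N) = orderOf a := by
    rw [hBexp]
    simp [-of_apply, -map_mul, map_mul (augm G), hN, augm_cycSum]
  have hcoef : ∀ g, ((1 + t) * N).coeff g = (if g ∈ Subgroup.zpowers a then 1 else 0)
      + (orderOf a : ℤ) * (if b⁻¹ * g ∈ Subgroup.zpowers a then 1 else 0)
      - (orderOf a : ℤ) * (if b⁻¹ * a⁻¹ * g ∈ Subgroup.zpowers a then 1 else 0) := by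
    intro g
    rw [hBexp, coeff_sub, coeff_add, coeff_smul, coeff_smul, Finsupp.sub_apply, Finsupp.add_apply,
      Finsupp.smul_apply, Finsupp.smul_apply, coeff_of_mul, coeff_of_mul, hN, coeff_cycSum hq0,
      coeff_cycSum hq0, coeff_cycSum hq0, mul_inv_rev, smul_eq_mul, smul_eq_mul]
  have hqz : (1 : ℤ) < orderOf a := by exact_mod_cast hq
  refine ⟨(1 - of ℤ G a) * (1 - t), (1 + t) * N, ?_, ?_, ?_, ?_⟩
  · intro h0
    have h1 : (1 - of ℤ G a) * (1 - t) * (1 + t) = 0 := by rw [h0, zero_mul]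
    rw [mul_assoc, hinv, mul_one, sub_eq_zero, ← map_one (of ℤ G)] at h1
    exact ha1 (of_injective h1).symm
  · intro h0
    rw [h0, map_zero] at haug
    omega
  · rw [mul_assoc, ← mul_assoc (1 - t), hinv, one_mul, hN, one_sub_mul_cycSum]
  · rintro ⟨X, Y, h, q, hhq, rfl, ⟨-, hB⟩ | ⟨-, hB⟩⟩
    · change _ = cycSum h * Y at hB
      have hfix : of ℤ G h⁻¹ * ((1 + t) * N) = (1 + t) * N := by
        have h1 : of ℤ G h * ((1 + t) * N) = (1 + t) * N := by
          rw [hB, ← mul_assoc, of_mul_cycSum]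
        conv_lhs => rw [← h1]
        rw [← mul_assoc, ← map_mul, inv_mul_cancel, map_one, one_mul]
      have hshift : ∀ g, ((1 + t) * N).coeff (h * g) = ((1 + t) * N).coeff g := by
        intro g
        have := congrArg (fun Z => Z.coeff g) hfix
        simpa only [coeff_of_mul, inv_inv] using this
      -- The coefficient `1` occurs only on the coset `⟨a⟩`.
      have hhC : h ∈ Subgroup.zpowers a := by
        have h1 := hshift 1
        rw [hcoef, hcoef] at h1
        by_contra hn
        simp only [mul_one, hn, Subgroup.one_mem, Subgroup.inv_mem_iff, hbC, hba, if_true,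
          if_false] at h1
        split_ifs at h1 <;> omega
      -- The coefficient `q` occurs only on the coset `b⟨a⟩`.
      have hhb : b⁻¹ * (h * b) ∈ Subgroup.zpowers a := by
        have h1 := hshift b
        rw [hcoef, hcoef] at h1
        by_contra hn
        simp only [hn, hbC, hbab, inv_mul_cancel, Subgroup.one_mem, if_true, if_false] at h1
        split_ifs at h1 <;> omega
      have : h = 1 := hab h hhC _ hhb (by group)
      simp [this] at hhq
    · have h1 := haug
      rw [hB, map_mul, map_sub, map_one, augm_of, sub_self, zero_mul] at h1
      omega

open Classical in
/-- The action of the first factor `H` on `H × K`: left translation on the slice `H × {1}`, and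
trivial elsewhere. -/
noncomputable def sliceAction (H K : Type*) [Group H] [Group K] : H →* Function.End (H × K) where
  toFun x p := if p.2 = 1 then (x * p.1, p.2) else p
  map_one' := by
    funext p
    change (if p.2 = 1 then (1 * p.1, p.2) else p) = p
    simp
  map_mul' x y := by
    funext p
    change _ = (fun p : H × K => if p.2 = 1 then (x * p.1, p.2) else p)
      (if p.2 = 1 then (y * p.1, p.2) else p)
    by_cases hp : p.2 = 1 <;> simp [hp, mul_assoc]

open Classical in
lemma sliceAction_apply {H K : Type*} [Group H] [Group K] (x : H) (p : H × K) :
    sliceAction H K x p = if p.2 = 1 then (x * p.1, p.2) else p := rfl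

/-- The action of the second factor `K` on `H × K` by left translation of the second coordinate. -/
def translationAction (H K : Type*) [Group H] [Group K] : K →* Function.End (H × K) where
  toFun y p := (p.1, y * p.2)
  map_one' := by
    funext p
    exact Prod.ext rfl (one_mul p.2)
  map_mul' x y := by
    funext p
    exact Prod.ext rfl (mul_assoc x y p.2)

lemma translationAction_apply {H K : Type*} [Group H] [Group K] (y : K) (p : H × K) :
    translationAction H K y p = (p.1, y * p.2) := rfl

/-- In a free product `H ∗ K`, the subgroup `H` meets its conjugate by a nontrivial element of `K`
trivially. Both sides of `hxy` are evaluated at the point `(1, 1)` of `H × K`. -/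
lemma coprod_eq_one_of_mul_eq {H K : Type*} [Group H] [Group K] {x x' : H} {y : K} (hy : y ≠ 1)
    (hxy : (Monoid.Coprod.inl x * Monoid.Coprod.inr y : Monoid.Coprod H K) =
      Monoid.Coprod.inr y * Monoid.Coprod.inl x') : x' = 1 := by
  have h1 := congrArg (Monoid.Coprod.lift (sliceAction H K) (translationAction H K)) hxy
  simp only [map_mul, Monoid.Coprod.lift_apply_inl, Monoid.Coprod.lift_apply_inr] at h1
  have h2 : sliceAction H K x (translationAction H K y (1, 1)) =
      translationAction H K y (sliceAction H K x' (1, 1)) := congrFun h1 (1, 1)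
  have h3 : (1 : H) = x' := by
    simpa [sliceAction_apply, translationAction_apply, hy] using congrArg Prod.fst h2
  exact h3.symm

lemma exists_nontrivial_of_coprod {q : ℕ} (hq : 1 < q) {K : Type*} [Group K] {y : K} (hy : y ≠ 1)
    (f : Monoid.Coprod (Multiplicative (ZMod q)) K →* G) (hf : Function.Injective f) :
    ∃ A B : MonoidAlgebra ℤ G, A ≠ 0 ∧ B ≠ 0 ∧ A * B = 0 ∧
      ¬ IsTrivialPairOfZeroDivisors A B := by
  let c : Multiplicative (ZMod q) := Multiplicative.ofAdd 1
  have hinj : Function.Injective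
      (f.comp (Monoid.Coprod.inl : Multiplicative (ZMod q) →* Monoid.Coprod _ K)) :=
    hf.comp Monoid.Coprod.inl_injective
  have hord : orderOf (f (Monoid.Coprod.inl c)) = q := by
    have := orderOf_injective _ hinj c
    rw [MonoidHom.comp_apply] at this
    rw [this, orderOf_ofAdd_eq_addOrderOf, ZMod.addOrderOf_one]
  refine exists_nontrivial_of_malnormal (f (Monoid.Coprod.inl c)) (f (Monoid.Coprod.inr y))
    (by rwa [hord]) ?_
  rintro _ ⟨i, rfl⟩ _ ⟨j, rfl⟩ hxy
  simp only [← map_zpow, ← map_mul] at hxy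
  have h1 := hf hxy
  rw [coprod_eq_one_of_mul_eq hy h1, map_one, mul_one, mul_eq_right] at h1
  simp only [← map_zpow, h1, map_one]

/-- The cyclic group `ZMod r` is nontrivial unless `r = 1`. -/
lemma exists_ne_one_zmod {r : ℕ} (hr : r = 0 ∨ 1 < r) :
    ∃ y : Multiplicative (ZMod r), y ≠ 1 := by
  have : Nontrivial (ZMod r) := ZMod.nontrivial_iff.mpr (by omega)
  exact exists_ne 1

end Helpers

/-- Theorem 2: if `G` contains a subgroup isomorphic either to a finite
noncyclic group, or to a free product `C_q * C_r` of cyclic groups (orders possibly infinite,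
encoded as `ZMod q` with `q = 0` meaning infinite) with `1 < min(q, r) < ∞`, then `ℤ[G]`
contains a nontrivial pair of zero-divisors. -/
theorem group_ring_has_nontrivial_pair_of_zero_divisors {G : Type*} [Group G]
    (hyp : (∃ H : Subgroup G, Finite H ∧ ¬ IsCyclic H) ∨
      (∃ q r : ℕ, (q = 0 ∨ 1 < q) ∧ (r = 0 ∨ 1 < r) ∧ (q ≠ 0 ∨ r ≠ 0) ∧
        ∃ f : Monoid.Coprod (Multiplicative (ZMod q)) (Multiplicative (ZMod r)) →* G,
          Function.Injective f)) :
    ∃ A B : MonoidAlgebra ℤ G, A ≠ 0 ∧ B ≠ 0 ∧ A * B = 0 ∧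
      ¬ IsTrivialPairOfZeroDivisors A B := by
  rcases hyp with ⟨H, hfin, hcyc⟩ | ⟨q, r, hq, hr, hqr, f, hf⟩
  · exact exists_nontrivial_of_finite_noncyclic H hcyc
  · rcases hqr with hq0 | hr0
    · obtain ⟨y, hy⟩ := exists_ne_one_zmod hr
      exact exists_nontrivial_of_coprod (hq.resolve_left hq0) hy f hf
    · obtain ⟨y, hy⟩ := exists_ne_one_zmod hq
      -- The finite factor is brought to the left.
      refine exists_nontrivial_of_coprod (hr.resolve_left hr0) hy
        (f.comp (Monoid.Coprod.swap _ _)) ?_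
      exact hf.comp (Function.LeftInverse.injective Monoid.Coprod.swap_swap)
end

section
/- Let G be a group and a, b ∈ G such that the subgroup ⟨a, b⟩ generated by a and b is isomorphic to the free product ⟨a⟩_q * ⟨b⟩_r via the canonical map (i.e., the homomorphism from the free product C_q * C_r to G sending the two canonical generators to a and b respectively is injective), where 1 < q < ∞, r ∈ {2, ∞}, and if r = 2 then q = 2. Set A := (1 − a)(1 + (1 − a)b(Σ_{i=1}^q a^i)) and B := (1 − (1 − a)b(Σ_{i=1}^q a^i))(Σ_{i=1}^q a^i) in ℤ[G]. Then A ≠ 0, B ≠ 0, AB = 0, and the pair (A, B) is a nontrivial pair of zero-divisors in ℤ[G]. -/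
/-!
Write `N = ∑ aⁱ` and `e = (1 - a) b N`. Since `N (1 - a) = 0`, we have `e ^ 2 = 0`, so `1 + e` is a
unit with inverse `1 - e`. Hence `A = (1 - a)(1 + e)` and `B = (1 - e) N` satisfy
`A B = (1 - a) N = 0`. Both are nonzero: `A` has coefficient `-1` at `a`, and `B` has coefficient
`1` at `1`, by the expansions below.

The only fact needed about the free product is `eq_one_of_pow_mul_eq`: the subgroup `⟨a⟩` meets
its conjugate by `b` trivially. It is read off from the action on `Option (ZMod q)` in which `a` fixes
`none` and rotates `ZMod q`, while `b` swaps `none` and `0`.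

If the pair were trivial through some `h`, then either `h B = B` or `A h = A`.
* `B = N - q b N + q a b N` is supported on the three distinct cosets `⟨a⟩`, `b⟨a⟩`, `ab⟨a⟩`, with
  distinct coefficients `1, -q, q`. Left multiplication by `h` thus fixes `⟨a⟩` and `b⟨a⟩`, so
  `h ∈ ⟨a⟩ ∩ b⟨a⟩b⁻¹ = 1`.
* `A = 1 - a + (b - 2 a b + a² b) N` takes the value `-1` at `a` only, so `a h = a` and `h = 1`.
-/

open MonoidAlgebra

/-- The action of `C_q` on `Option (ZMod q)` fixing `none` and rotating `ZMod q`. -/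
def rotationHom (q : ℕ) :
    Multiplicative (ZMod q) →* Equiv.Perm (Option (ZMod q)) where
  toFun x := (Equiv.addLeft x.toAdd).optionCongr
  map_one' := by
    ext o : 1
    cases o <;> simp
  map_mul' x y := by
    ext o : 1
    cases o <;> simp [add_assoc]

/-- The action of `C_r`, for `r` even (`r = 0` giving the infinite cyclic group), on
`Option (ZMod q)` whose generator swaps `none` and `some 0`. -/
def swapHom (q r : ℕ) (hr : Even r) :
    Multiplicative (ZMod r) →* Equiv.Perm (Option (ZMod q)) :=
  AddMonoidHom.toMultiplicativeLeft (ZMod.lift r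
    ⟨zmultiplesHom _ (Additive.ofMul (Equiv.swap none (some 0))), by
      obtain ⟨k, rfl⟩ := hr
      rw [zmultiplesHom_apply, ← ofMul_zpow, ofMul_eq_zero, zpow_natCast, ← two_mul, pow_mul,
        sq, Equiv.swap_mul_self, one_pow]⟩)

lemma swapHom_gen (q r : ℕ) (hr : Even r) :
    swapHom q r hr (Multiplicative.ofAdd 1) = Equiv.swap none (some 0) := by
  have h := ZMod.lift_coe r (A := Additive (Equiv.Perm (Option (ZMod q))))
    ⟨zmultiplesHom _ (Additive.ofMul (Equiv.swap none (some 0))), by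
      obtain ⟨k, rfl⟩ := hr
      rw [zmultiplesHom_apply, ← ofMul_zpow, ofMul_eq_zero, zpow_natCast, ← two_mul, pow_mul,
        sq, Equiv.swap_mul_self, one_pow]⟩ 1
  simp only [Int.cast_one, zmultiplesHom_apply, one_zsmul] at h
  exact congrArg Additive.toMul h

section FreeProduct

variable {G : Type*} [Group G] {a b : G} {q r : ℕ}
  {ψ : Monoid.Coprod (Multiplicative (ZMod q)) (Multiplicative (ZMod r)) →* G}

lemma pow_eq_image (hψa : ψ (Monoid.Coprod.inl (Multiplicative.ofAdd (1 : ZMod q))) = a)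
    (i : ℕ) : a ^ i = ψ (Monoid.Coprod.inl (Multiplicative.ofAdd (i : ZMod q))) := by
  rw [← hψa, ← map_pow, ← map_pow, ← ofAdd_nsmul, nsmul_one]

/-- `⟨a⟩ ∩ b⟨a⟩b⁻¹` is trivial. -/
lemma eq_one_of_pow_mul_eq (hr : Even r)
    (hψa : ψ (Monoid.Coprod.inl (Multiplicative.ofAdd (1 : ZMod q))) = a)
    (hψb : ψ (Monoid.Coprod.inr (Multiplicative.ofAdd (1 : ZMod r))) = b)
    (hψ : Function.Injective ψ) (i j : ℕ) (h : a ^ i * b = b * a ^ j) : a ^ i = 1 := by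
  rw [pow_eq_image hψa i, pow_eq_image hψa j, ← hψb, ← map_mul, ← map_mul] at h
  have h1 := congrArg (Monoid.Coprod.lift (rotationHom q) (swapHom q r hr)) (hψ h)
  rw [map_mul, map_mul, Monoid.Coprod.lift_apply_inl, Monoid.Coprod.lift_apply_inl,
    Monoid.Coprod.lift_apply_inr, swapHom_gen] at h1
  -- both sides move `none` into `ZMod q`, to `i` and `0` respectively
  have h2 := congrArg (fun σ : Equiv.Perm (Option (ZMod q)) => σ none) h1
  have h3 : (i : ZMod q) = 0 := by simpa [rotationHom] using h2
  rw [pow_eq_image hψa, h3, ofAdd_zero, map_one, map_one]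

lemma orderOf_gen (hψa : ψ (Monoid.Coprod.inl (Multiplicative.ofAdd (1 : ZMod q))) = a)
    (hψ : Function.Injective ψ) : orderOf a = q := by
  rw [← hψa, orderOf_injective ψ hψ, orderOf_injective _ Monoid.Coprod.inl_injective,
    orderOf_ofAdd_eq_addOrderOf, ZMod.addOrderOf_one]

end FreeProduct

section GroupRing

variable {G : Type*} [Group G]

open scoped Classical in
/-- The norm element `∑ aⁱ` of `⟨a⟩` is the indicator function of `⟨a⟩`. -/
lemma norm_coeff {a : G} {q : ℕ} (hq : 1 < q) (ha : orderOf a = q) (g : G) :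
    (∑ i ∈ Finset.Icc 1 q, of ℤ G a ^ i).coeff g =
      if g ∈ Subgroup.zpowers a then (1 : ℤ) else 0 := by
  have hfin : IsOfFinOrder a := by
    rw [← orderOf_pos_iff]
    omega
  have hN : ∑ i ∈ Finset.Icc 1 q, of ℤ G a ^ i = ∑ i ∈ Finset.range q, of ℤ G a ^ i := by
    have h1 : Finset.Icc 1 q = Finset.Ico 1 (q + 1) := by
      ext
      simp
    have h2 : of ℤ G a ^ q = 1 := by rw [← map_pow, ← ha, pow_orderOf_eq_one, map_one]
    rw [h1, Finset.sum_Ico_succ_top hq.le, h2, Finset.range_eq_Ico,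
      Finset.sum_eq_sum_Ico_succ_bot (by omega : 0 < q), pow_zero, add_comm]
  have hs : (∑ i ∈ Finset.range q, of ℤ G a ^ i).coeff g =
      ∑ i ∈ Finset.range q, if a ^ i = g then (1 : ℤ) else 0 := by
    simp only [of_apply]
    simp [Finsupp.single_apply]
  rw [hN, hs]
  split_ifs with hg
  · rw [hfin.mem_zpowers_iff_mem_range_orderOf, ha] at hg
    obtain ⟨i, hi, rfl⟩ := Finset.mem_image.1 hg
    rw [Finset.sum_eq_single_of_mem i hi, if_pos rfl]
    intro j hj hji
    refine if_neg fun h => hji (pow_injOn_Iio_orderOf ?_ ?_ h) <;> simp_all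
  · refine Finset.sum_eq_zero fun i _ => if_neg ?_
    rintro rfl
    exact hg (Subgroup.npow_mem_zpowers a i)

/-- Each half of a trivial pair makes one of the two factors invariant under the element `h`. -/
lemma IsTrivialPairOfZeroDivisors.invariant {A B : MonoidAlgebra ℤ G}
    (h : IsTrivialPairOfZeroDivisors A B) :
    ∃ x : G, x ≠ 1 ∧ (of ℤ G x * B = B ∨ A * of ℤ G x = A) := by
  obtain ⟨X, Y, x, n, hn, hx, h⟩ := h
  have hxn : of ℤ G x ^ n = 1 := by rw [← map_pow, ← hx, pow_orderOf_eq_one, map_one]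
  refine ⟨x, ?_, ?_⟩
  · rintro rfl
    rw [orderOf_one] at hx
    omega
  · rcases h with ⟨-, h⟩ | ⟨h, -⟩
    · left
      have h1 := mul_neg_geom_sum (of ℤ G x) n
      rw [hxn, sub_self] at h1
      have h2 : (1 - of ℤ G x) * B = 0 := by rw [h, ← mul_assoc, h1, zero_mul]
      rw [sub_mul, one_mul, sub_eq_zero] at h2
      exact h2.symm
    · right
      have h1 := geom_sum_mul_neg (of ℤ G x) n
      rw [hxn, sub_self] at h1
      have h2 : A * (1 - of ℤ G x) = 0 := by rw [h, mul_assoc, h1, mul_zero]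
      rw [mul_sub, mul_one, sub_eq_zero] at h2
      exact h2.symm

end GroupRing

/-- Lemma 3: suppose `⟨a, b⟩ ≤ G` is canonically isomorphic to the free
product `C_q * C_r` (i.e. the homomorphism from `C_q * C_r` sending the canonical
generators to `a` and `b` is injective), where `1 < q < ∞`, `r ∈ {2, ∞}` (here `r = 0`
encodes `∞`), and `q = 2` whenever `r = 2`. Then
`A := (1-a)(1 + (1-a)b(Σ_{i=1}^q a^i))` and `B := (1 - (1-a)b(Σ_{i=1}^q a^i))(Σ_{i=1}^q a^i)`
form a nontrivial pair of zero-divisors in `ℤ[G]`. -/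
theorem free_product_nontrivial_pair_of_zero_divisors {G : Type*} [Group G] (a b : G)
    (q r : ℕ) (hq : 1 < q) (hr : r = 2 ∨ r = 0) (hrq : r = 2 → q = 2)
    (ψ : Monoid.Coprod (Multiplicative (ZMod q)) (Multiplicative (ZMod r)) →* G)
    (hψa : ψ (Monoid.Coprod.inl (Multiplicative.ofAdd (1 : ZMod q))) = a)
    (hψb : ψ (Monoid.Coprod.inr (Multiplicative.ofAdd (1 : ZMod r))) = b)
    (hψ : Function.Injective ψ) :
    let A : MonoidAlgebra ℤ G :=
      (1 - of ℤ G a) * (1 + (1 - of ℤ G a) * of ℤ G b * ∑ i ∈ Finset.Icc 1 q, of ℤ G a ^ i)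
    let B : MonoidAlgebra ℤ G :=
      (1 - (1 - of ℤ G a) * of ℤ G b * ∑ i ∈ Finset.Icc 1 q, of ℤ G a ^ i) *
        ∑ i ∈ Finset.Icc 1 q, of ℤ G a ^ i
    A ≠ 0 ∧ B ≠ 0 ∧ A * B = 0 ∧ ¬ IsTrivialPairOfZeroDivisors A B := by
  intro A B
  classical
  have hreven : Even r := by rcases hr with rfl | rfl <;> decide
  have hord : orderOf a = q := orderOf_gen hψa hψ
  have hfin : IsOfFinOrder a := by
    rw [← orderOf_pos_iff]
    omega
  have hconj : ∀ h ∈ Subgroup.zpowers a, b⁻¹ * h * b ∈ Subgroup.zpowers a → h = 1 := by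
    intro h h1 h2
    rw [hfin.mem_zpowers_iff_mem_range_orderOf] at h1 h2
    obtain ⟨i, -, rfl⟩ := Finset.mem_image.1 h1
    obtain ⟨j, -, hj⟩ := Finset.mem_image.1 h2
    refine eq_one_of_pow_mul_eq hreven hψa hψb hψ i j ?_
    rw [hj]
    group
  have ha1 : a ≠ 1 := by
    rintro rfl
    rw [orderOf_one] at hord
    omega
  have haz : a ∈ Subgroup.zpowers a := Subgroup.mem_zpowers a
  have hc : b⁻¹ * a * b ∉ Subgroup.zpowers a := fun h => ha1 (hconj a haz h)
  have hb : b ∉ Subgroup.zpowers a := fun h =>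
    hc (mul_mem (mul_mem (inv_mem h) haz) h)
  have hcoeff := norm_coeff hq hord
  set N : MonoidAlgebra ℤ G := ∑ i ∈ Finset.Icc 1 q, of ℤ G a ^ i with hN
  set u : MonoidAlgebra ℤ G := of ℤ G a with hu
  set v : MonoidAlgebra ℤ G := of ℤ G b with hv
  have hNu : N * u = N := by
    ext g
    rw [hu, coeff_mul_of, hcoeff, hcoeff]
    simp only [Subgroup.mul_mem_cancel_right _ (inv_mem haz)]
  have huN : u * N = N := by
    ext g
    rw [hu, coeff_of_mul, hcoeff, hcoeff]
    simp only [Subgroup.mul_mem_cancel_left _ (inv_mem haz)]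
  have hNN : N * N = (q : ℤ) • N := by
    have hi : ∀ i : ℕ, u ^ i * N = N := by
      intro i
      induction i with
      | zero => rw [pow_zero, one_mul]
      | succ k ih => rw [pow_succ, mul_assoc, huN, ih]
    nth_rewrite 1 [hN]
    rw [Finset.sum_mul, Finset.sum_congr rfl fun i _ => hi i]
    simp
  have hN1u : N * (1 - u) = 0 := by rw [mul_sub, mul_one, hNu, sub_self]
  have hu1N : (1 - u) * N = 0 := by rw [sub_mul, one_mul, huN, sub_self]
  have hAe : A = (1 - u) * (1 + (1 - u) * v * N) := rfl
  have hBe : B = (1 - (1 - u) * v * N) * N := rfl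
  have hee : ((1 - u) * v * N) * ((1 - u) * v * N) = 0 := by
    have : ((1 - u) * v * N) * ((1 - u) * v * N) = (1 - u) * v * (N * (1 - u)) * v * N := by
      simp only [mul_assoc]
    rw [this, hN1u]
    simp
  have hinv : (1 + (1 - u) * v * N) * (1 - (1 - u) * v * N) = 1 := by
    rw [mul_sub, mul_one, add_mul, one_mul, hee]
    abel
  have hAcoeff : ∀ g : G, A.coeff g = (if g = 1 then 1 else 0) - (if g = a then 1 else 0) +
      ((if b⁻¹ * g ∈ Subgroup.zpowers a then 1 else 0)
        - 2 * (if b⁻¹ * (a⁻¹ * g) ∈ Subgroup.zpowers a then 1 else 0)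
        + (if b⁻¹ * (a⁻¹ * (a⁻¹ * g)) ∈ Subgroup.zpowers a then 1 else 0)) := by
    intro g
    have h1 : A = of ℤ G 1 - of ℤ G a + (of ℤ G b * N - (2 : ℤ) • (of ℤ G a * (of ℤ G b * N))
        + of ℤ G a * (of ℤ G a * (of ℤ G b * N))) := by
      rw [hAe, map_one, ← hu, ← hv]
      noncomm_ring
    rw [h1]
    simp only [coeff_add, coeff_sub, coeff_smul, Finsupp.add_apply, Finsupp.sub_apply,
      Finsupp.smul_apply, coeff_of_mul, hcoeff, smul_eq_mul]
    simp [of_apply, Finsupp.single_apply, eq_comm]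
  have hBcoeff : ∀ g : G, B.coeff g = (if g ∈ Subgroup.zpowers a then 1 else 0)
        - q * (if b⁻¹ * g ∈ Subgroup.zpowers a then 1 else 0)
        + q * (if b⁻¹ * (a⁻¹ * g) ∈ Subgroup.zpowers a then 1 else 0) := by
    intro g
    have h1 : B = N - (q : ℤ) • (of ℤ G b * N) + (q : ℤ) • (of ℤ G a * (of ℤ G b * N)) := by
      rw [hBe, ← hu, ← hv]
      have : (1 - (1 - u) * v * N) * N = N - (1 - u) * v * (N * N) := by noncomm_ring
      rw [this, hNN, mul_smul_comm, sub_mul, one_mul, sub_mul, smul_sub, mul_assoc]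
      abel
    rw [h1]
    simp only [coeff_add, coeff_sub, coeff_smul, Finsupp.add_apply, Finsupp.sub_apply,
      Finsupp.smul_apply, coeff_of_mul, hcoeff, smul_eq_mul]
  have hbi : b⁻¹ ∉ Subgroup.zpowers a := fun h => hb (inv_mem_iff.1 h)
  have hmem : ∀ x, x ∈ Subgroup.zpowers a → b⁻¹ * x ∉ Subgroup.zpowers a := fun x hx h =>
    hbi ((Subgroup.mul_mem_cancel_right _ hx).1 h)
  have hai : a⁻¹ ∈ Subgroup.zpowers a := inv_mem haz
  have hAa : ∀ g, A.coeff g = -1 ↔ g = a := by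
    intro g
    rw [hAcoeff]
    by_cases hg : g ∈ Subgroup.zpowers a
    · rw [if_neg (hmem _ hg), if_neg (hmem _ (mul_mem hai hg)),
        if_neg (hmem _ (mul_mem hai (mul_mem hai hg)))]
      by_cases hga : g = a
      · simp [hga, ha1]
      · by_cases hg1 : g = 1 <;> simp [hga, hg1, ha1.symm]
    · have hg1 : g ≠ 1 := fun h => hg (h ▸ one_mem _)
      have hga : g ≠ a := fun h => hg (h ▸ haz)
      -- the value `-2` on `ab⟨a⟩` cannot be corrected to `-1` by overlap with `b⟨a⟩` or `a²b⟨a⟩`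
      have key : ∀ y, b⁻¹ * y ∈ Subgroup.zpowers a →
          b⁻¹ * (a⁻¹ * y) ∉ Subgroup.zpowers a := by
        intro y h1 h2
        refine hc ?_
        have := mul_mem h1 (inv_mem h2)
        convert this using 1
        group
      rw [if_neg hg1, if_neg hga, iff_false_right hga]
      by_cases p : b⁻¹ * (a⁻¹ * g) ∈ Subgroup.zpowers a
      · rw [if_neg fun h => key g h p, if_pos p, if_neg (key _ p)]
        norm_num
      · rw [if_neg p]
        split_ifs <;> norm_num
  refine ⟨?_, ?_, ?_, ?_⟩
  · intro h0
    have := (hAa a).2 rfl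
    simp [h0] at this
  · intro h0
    have := hBcoeff 1
    rw [if_pos (one_mem _), if_neg (hmem _ (one_mem _)), if_neg (hmem _ (mul_mem hai (one_mem _))),
      h0] at this
    simp at this
  · calc A * B = (1 - u) * ((1 + (1 - u) * v * N) * (1 - (1 - u) * v * N)) * N := by
          rw [hAe, hBe]
          simp only [mul_assoc]
      _ = 0 := by rw [hinv, mul_one, hu1N]
  · intro htriv
    obtain ⟨x, hx1, hx | hx⟩ := htriv.invariant
    · have hinvar : ∀ g, B.coeff (x * g) = B.coeff g := by
        intro g
        nth_rewrite 1 [← hx]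
        rw [coeff_of_mul, inv_mul_cancel_left]
      have hq' : (2 : ℤ) ≤ q := by exact_mod_cast hq
      have hxz : x ∈ Subgroup.zpowers a := by
        -- modulo `q`, only the coset `⟨a⟩` contributes to `B`
        by_contra hxz
        have h1 := hinvar 1
        rw [hBcoeff, hBcoeff, if_pos (one_mem _), if_neg (hmem _ (one_mem _)),
          if_neg (hmem _ (mul_mem hai (one_mem _))), mul_one, if_neg hxz] at h1
        split_ifs at h1 <;> linarith
      refine hx1 (hconj x hxz ?_)
      by_contra hxb
      have h1 := hinvar b
      have h2 : b⁻¹ * (a⁻¹ * b) ∉ Subgroup.zpowers a := by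
        intro h
        refine hc ?_
        convert inv_mem h using 1
        group
      rw [hBcoeff, hBcoeff, if_neg hb, inv_mul_cancel, if_pos (one_mem _), if_neg h2,
        ← mul_assoc b⁻¹ x b, if_neg hxb] at h1
      split_ifs at h1 <;> linarith
    · have h1 : A.coeff (a * x) = -1 := by
        rw [← hx, coeff_mul_of, mul_inv_cancel_right]
        exact (hAa a).2 rfl
      exact hx1 (mul_eq_left.1 ((hAa _).1 h1))
end

section
/- Let G be a group containing a finite subgroup H, and let h₁, h₂ ∈ H be such that the subgroup ⟨h₁, h₂⟩ generated by h₁ and h₂ is not cyclic. Then A := 2 − h₁ − h₂ ∈ ℤ[G] is a left zero-divisor (there exists B ∈ ℤ[G], B ≠ 0, with AB = 0), and for every B ∈ ℤ[G] with B ≠ 0 and AB = 0, the pair (A, B) is not a trivial pair of zero-divisors. -/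
/-!
The sum of all elements of `H` is annihilated by `A = 2 - h₁ - h₂`, because it is fixed by left
multiplication by `h₁` and `h₂`.

For nontriviality, let `h ≠ 1` have order `q` and put `N = 1 + h + ⋯ + h^{q-1}`, the indicator
function of `⟨h⟩`; then `(1 - h) N = N (1 - h) = 0`. If `A = X (1 - h)`, then `A N = 0`, that is,
`2 N = h₁ N + h₂ N`; as the coefficients of `N` are at most `1`, comparing coefficients at the
identity gives `h₁, h₂ ∈ ⟨h⟩`, so `⟨h₁, h₂⟩` is cyclic. If `A = X N`, then `A = A h`, so `A` has
equal coefficients at `1` and at `h`; the latter is at most `0`, which forces `h₁ = h₂ = 1`. So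
already the shape of `A` rules out both kinds of trivial pair, whatever `B` is.
-/

open MonoidAlgebra

/-- In `ℤ[G]`, the element `1 + h + ⋯ + h^{q-1}`, with `q > 0` the order of `h`, is the indicator
function of `⟨h⟩`. -/
lemma coeff_sum_range_orderOf_pow {G : Type*} [Group G] (h : G) (hq : 0 < orderOf h) (g : G)
    [Decidable (g ∈ Subgroup.zpowers h)] :
    (∑ i ∈ Finset.range (orderOf h), of ℤ G h ^ i).coeff g =
      if g ∈ Subgroup.zpowers h then 1 else 0 := by
  classical
  have hfin : IsOfFinOrder h := orderOf_pos_iff.mp hq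
  have hsum : (∑ i ∈ Finset.range (orderOf h), of ℤ G h ^ i).coeff g =
      ∑ i ∈ Finset.range (orderOf h), if h ^ i = g then (1 : ℤ) else 0 := by
    simp only [of_apply, single_pow, one_pow, coeff_sum, Finsupp.finsetSum_apply, coeff_single,
      Finsupp.single_apply]
  rw [hsum]
  split_ifs with hg
  · obtain ⟨n, hn, rfl⟩ := Finset.mem_image.mp (hfin.mem_zpowers_iff_mem_range_orderOf.mp hg)
    rw [Finset.sum_eq_single_of_mem n hn, if_pos rfl]
    intro i hi hne
    refine if_neg fun e => hne ?_
    exact pow_injOn_Iio_orderOf (Finset.mem_range.mp hi) (Finset.mem_range.mp hn) e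
  · refine Finset.sum_eq_zero fun i _ => if_neg ?_
    rintro rfl
    exact hg (Subgroup.npow_mem_zpowers h i)

lemma isCyclic_closure_pair_of_mem_zpowers {G : Type*} [Group G] {h₁ h₂ h : G}
    (m₁ : h₁ ∈ Subgroup.zpowers h) (m₂ : h₂ ∈ Subgroup.zpowers h) :
    IsCyclic (Subgroup.closure ({h₁, h₂} : Set G)) := by
  have hle : Subgroup.closure ({h₁, h₂} : Set G) ≤ Subgroup.zpowers h := by
    rw [Subgroup.closure_le]
    rintro x (rfl | rfl)
    exacts [m₁, m₂]
  exact isCyclic_of_injective (Subgroup.inclusion hle) (Subgroup.inclusion_injective hle)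

/-- if `h₁, h₂` lie in a finite subgroup `H` of `G` and generate a noncyclic
subgroup, then `A := 2 - h₁ - h₂` is a left zero-divisor of `ℤ[G]` and is a nontrivial one:
no `B ≠ 0` with `A * B = 0` makes `(A, B)` a trivial pair of zero-divisors. -/
theorem two_sub_h₁_sub_h₂_nontrivial_zero_divisor {G : Type*} [Group G]
    (H : Subgroup G) (hHfin : Finite H) (h₁ h₂ : G) (h₁H : h₁ ∈ H) (h₂H : h₂ ∈ H)
    (hnc : ¬ IsCyclic (Subgroup.closure ({h₁, h₂} : Set G))) :
    (∃ B : MonoidAlgebra ℤ G, B ≠ 0 ∧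
      (2 - of ℤ G h₁ - of ℤ G h₂) * B = 0) ∧
    (∀ B : MonoidAlgebra ℤ G, B ≠ 0 → (2 - of ℤ G h₁ - of ℤ G h₂) * B = 0 →
      ¬ IsTrivialPairOfZeroDivisors (2 - of ℤ G h₁ - of ℤ G h₂) B) := by
  classical
  constructor
  · have : Fintype H := Fintype.ofFinite H
    have key : ∀ g ∈ H, of ℤ G g * ∑ x : H, of ℤ G (x : G) = ∑ x : H, of ℤ G (x : G) := by
      intro g hg
      rw [Finset.mul_sum]
      exact Fintype.sum_equiv (Equiv.mulLeft (⟨g, hg⟩ : H)) _ _ fun x => by simp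
    refine ⟨∑ x : H, of ℤ G (x : G), fun h0 => ?_, ?_⟩
    · -- The augmentation of the sum is the order of `H`, which is positive.
      have h := congrArg (MonoidAlgebra.lift ℤ ℤ G 1) h0
      simp at h
    · rw [sub_mul, sub_mul, key h₁ h₁H, key h₂ h₂H, two_mul]
      abel
  · rintro B - - ⟨X, Y, h, q, hq, rfl, ⟨hA, -⟩ | ⟨hA, -⟩⟩
    · have hAN : (2 - of ℤ G h₁ - of ℤ G h₂) *
          ∑ i ∈ Finset.range (orderOf h), of ℤ G h ^ i = 0 := by
        rw [hA, mul_assoc, mul_neg_geom_sum, ← map_pow, pow_orderOf_eq_one, map_one, sub_self,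
          mul_zero]
      have h1 := congrArg (fun Z => Z.coeff 1) hAN
      simp only [sub_mul, two_mul, of_apply, coeff_sub, coeff_add, Finsupp.sub_apply,
        Finsupp.add_apply, coeff_single_mul_apply, one_mul, mul_one, coeff_zero,
        Finsupp.zero_apply] at h1
      simp only [← of_apply, coeff_sum_range_orderOf_pow h (by omega), one_mem, if_true,
        inv_mem_iff] at h1
      apply hnc
      by_cases m₁ : h₁ ∈ Subgroup.zpowers h <;> by_cases m₂ : h₂ ∈ Subgroup.zpowers h <;>
        simp [m₁, m₂] at h1
      exact isCyclic_closure_pair_of_mem_zpowers m₁ m₂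
    · have hAh : (2 - of ℤ G h₁ - of ℤ G h₂) * (1 - of ℤ G h) = 0 := by
        rw [hA, mul_assoc, geom_sum_mul_neg, ← map_pow, pow_orderOf_eq_one, map_one, sub_self,
          mul_zero]
      have hne : h ≠ 1 := by
        rintro rfl
        simp at hq
      have h1 := congrArg (fun Z => Z.coeff h) hAh
      have h2 : (2 : MonoidAlgebra ℤ G) = single 1 1 + single 1 1 := by
        rw [← one_def, one_add_one_eq_two]
      simp only [mul_sub, mul_one, h2, of_apply, coeff_sub, coeff_add, Finsupp.sub_apply,
        Finsupp.add_apply, coeff_mul_single_apply, coeff_single, Finsupp.single_apply,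
        mul_inv_cancel, if_true, hne.symm, if_false, coeff_zero, Finsupp.zero_apply] at h1
      apply hnc
      have e₁ : h₁ = 1 := by
        by_contra e
        rw [if_neg e] at h1
        split_ifs at h1 <;> omega
      have e₂ : h₂ = 1 := by
        by_contra e
        rw [if_neg e] at h1
        split_ifs at h1 <;> omega
      subst e₁ e₂
      exact isCyclic_closure_pair_of_mem_zpowers (one_mem (Subgroup.zpowers 1)) (one_mem _)
end

section
/- Let G be a group, n ≥ 1 an integer, a, b ∈ G, c := aba⁻¹b⁻¹, and d := aba⁻¹. If c^i d ≠ 1 for all i = 0, 1, …, n−1, then (1 + c + ⋯ + c^{n-1})(1 − d) ≠ 0 in ℤ[G]. If a b^j ≠ 1 for all j = 0, 1, …, n−1, then (1 − a)(1 + b + ⋯ + b^{n-1}) ≠ 0 in ℤ[G]. -/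
/-!
Expanding either product gives `∑ sᵢ - ∑ tᵢ` with group elements `sᵢ`, `tᵢ`, where `s₀ = 1` and
every `tᵢ ≠ 1`. The coefficient of `1` is therefore at least `1` in the first sum (coefficients
are nonnegative, so nothing cancels the contribution of `s₀`) and `0` in the second
(`sum_of_ne_sum_of`).
-/

open MonoidAlgebra

/-- The two sums differ in the coefficient of `1 : G`. -/
lemma sum_of_ne_sum_of {G : Type*} [Group G] (n : ℕ) (hn : 1 ≤ n) (s t : ℕ → G) (hs : s 0 = 1)
    (ht : ∀ i < n, t i ≠ 1) :
    ∑ i ∈ Finset.range n, of ℤ G (s i) ≠ ∑ i ∈ Finset.range n, of ℤ G (t i) := by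
  classical
  intro h
  have h1 := congrArg (fun x : MonoidAlgebra ℤ G => x.coeff 1) h
  simp only [coeff_sum, Finsupp.finsetSum_apply, of_apply, coeff_single,
    Finsupp.single_apply] at h1
  rw [Finset.sum_eq_zero (s := Finset.range n) (f := fun i => if t i = 1 then (1 : ℤ) else 0)
    fun i hi => if_neg (ht i (Finset.mem_range.mp hi))] at h1
  have h2 := Finset.single_le_sum (s := Finset.range n)
    (f := fun i => if s i = 1 then (1 : ℤ) else 0)
    (fun i _ => by positivity) (Finset.mem_range.mpr hn)
  simp only [hs, if_true] at h2
  omega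

/-- with `c := a b a⁻¹ b⁻¹`, `d := a b a⁻¹`:
if `c^i d ≠ 1` for all `i < n` then `(1 + c + ⋯ + c^{n-1})(1 - d) ≠ 0`, and
if `a b^j ≠ 1` for all `j < n` then `(1 - a)(1 + b + ⋯ + b^{n-1}) ≠ 0`. -/
theorem factors_ne_zero {G : Type*} [Group G] (a b : G) (n : ℕ) (hn : 1 ≤ n) :
    ((∀ i < n, (a * b * a⁻¹ * b⁻¹) ^ i * (a * b * a⁻¹) ≠ 1) →
      (∑ i ∈ Finset.range n, of ℤ G (a * b * a⁻¹ * b⁻¹) ^ i) *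
        (1 - of ℤ G (a * b * a⁻¹)) ≠ 0) ∧
    ((∀ j < n, a * b ^ j ≠ 1) →
      (1 - of ℤ G a) * (∑ i ∈ Finset.range n, of ℤ G b ^ i) ≠ 0) := by
  refine ⟨fun h h0 => ?_, fun h h0 => ?_⟩
  · refine sum_of_ne_sum_of n hn _ _ (pow_zero (a * b * a⁻¹ * b⁻¹)) h ?_
    rw [mul_sub, mul_one, sub_eq_zero, Finset.sum_mul] at h0
    simpa only [← map_pow, ← map_mul] using h0
  · refine sum_of_ne_sum_of n hn _ _ (pow_zero b) h ?_
    rw [sub_mul, one_mul, sub_eq_zero, Finset.mul_sum] at h0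
    simpa only [← map_pow, ← map_mul] using h0
end

section
/- Let q, r satisfy 1 < q < ∞ and 1 < r ≤ ∞, with (q, r) ≠ (2, 2), and let G = C_q * C_r be the free product of cyclic groups with canonical generators a (of order q) and b (of order r). Then the subgroup ⟨a, babab⟩ of G generated by a and babab is isomorphic to the free product C_q * C_∞ via the canonical map; that is, babab has infinite order in G and the homomorphism from the free product C_q * ℤ to G sending the canonical generators to a and babab respectively is injective. -/
/-!
Write `t = babab`. For every `n ≠ 0` the power `t ^ n` has a reduced expression that begins and
ends with a letter from `C_r`. For positive `n` there are two cases: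
* if `b * b ≠ 1`, then `t ^ n = bab a b² a b a b² ⋯ a b² a bab`, where two consecutive factors `t`
  merge into the letter `b²` without further cancellation;
* if `b * b = 1`, then `(q, r) ≠ (2, 2)` forces `a * a ≠ 1`, and
  `t ^ n = bab a² b a² b ⋯ a² b ab`.

Negative powers follow by inverting. Consequently, substituting these expressions in a nonempty
reduced word of `C_q * ℤ` gives a nonempty reduced word of `C_q * C_r`, with the same first and last
factors; such a word is not trivial, so the canonical map is injective
(`lift_injective_of_neWord`). That `t` has infinite order follows from injectivity.

Reduced words are available for the indexed coproduct `Monoid.CoprodI`, so the argument is carried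
out there for a family indexed by `Bool` and transported to the binary coproduct `Monoid.Coprod`.
-/

open Monoid

/-- A nonempty reduced word represents a nontrivial element. -/
lemma neWord_prod_ne_one {ι : Type*} {M : ι → Type*} [∀ i, Monoid (M i)] {i j : ι}
    (w : CoprodI.NeWord M i j) : w.prod ≠ 1 := by
  classical
  intro h
  have hempty : w.toWord = CoprodI.Word.empty := by
    apply (CoprodI.Word.equiv (M := M)).symm.injective
    exact h.trans CoprodI.Word.prod_empty.symm
  exact w.toList_ne_nil (congrArg CoprodI.Word.toList hempty)

/-- If each `f i` sends nontrivial elements of `H i` to reduced words beginning and ending in the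
factor `M i`, then reduced words go to reduced words, since no cancellation occurs between the
images of adjacent letters. Hence `lift f` is injective. -/
lemma lift_injective_of_neWord {ι : Type*} {H M : ι → Type*} [∀ i, Group (H i)]
    [∀ i, Group (M i)] (f : ∀ i, H i →* CoprodI M)
    (hf : ∀ i (h : H i), h ≠ 1 → ∃ w : CoprodI.NeWord M i i, w.prod = f i h) :
    Function.Injective (CoprodI.lift f) := by
  classical
  have key : ∀ {i j : ι} (w : CoprodI.NeWord H i j),
      ∃ w' : CoprodI.NeWord M i j, w'.prod = CoprodI.lift f w.prod := by
    intro i j w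
    induction w with
    | singleton x hx =>
      obtain ⟨w', hw'⟩ := hf _ x hx
      exact ⟨w', by simp [hw']⟩
    | append w₁ hne w₂ ih₁ ih₂ =>
      obtain ⟨u₁, h₁⟩ := ih₁
      obtain ⟨u₂, h₂⟩ := ih₂
      exact ⟨u₁.append hne u₂, by simp [h₁, h₂]⟩
  rw [injective_iff_map_eq_one]
  intro x hx
  obtain ⟨w, rfl⟩ := (CoprodI.Word.equiv (M := H)).symm.surjective x
  by_cases hw : w = CoprodI.Word.empty
  · subst hw
    exact CoprodI.Word.prod_empty
  · obtain ⟨i, j, w', rfl⟩ := CoprodI.NeWord.of_word w hw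
    obtain ⟨u, hu⟩ := key w'
    exact absurd (hu.trans hx) (neWord_prod_ne_one u)

/-- The `Bool`-indexed family with members `A` (at `false`) and `B` (at `true`). -/
def boolFamily (A B : Type) : Bool → Type
  | false => A
  | true => B

instance boolFamilyGroup (A B : Type) [Group A] [Group B] : ∀ i, Group (boolFamily A B i)
  | false => inferInstanceAs (Group A)
  | true => inferInstanceAs (Group B)

section TwoFactors

variable {A B : Type} [Group A] [Group B]

/-- The inclusion of the first factor into the `Bool`-indexed coproduct. -/
def ofFst (A B : Type) [Group A] [Group B] : A →* CoprodI (boolFamily A B) :=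
  CoprodI.of (M := boolFamily A B) (i := false)

/-- The inclusion of the second factor into the `Bool`-indexed coproduct. -/
def ofSnd (A B : Type) [Group A] [Group B] : B →* CoprodI (boolFamily A B) :=
  CoprodI.of (M := boolFamily A B) (i := true)

/-- The canonical map from the binary coproduct to the `Bool`-indexed one. -/
def toCoprodI (A B : Type) [Group A] [Group B] :
    Coprod A B →* CoprodI (boolFamily A B) :=
  Coprod.lift (ofFst A B) (ofSnd A B)

lemma toCoprodI_injective : Function.Injective (toCoprodI A B) := by
  let g : ∀ i, boolFamily A B i →* Coprod A B := fun i =>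
    match i with
    | false => (Coprod.inl : A →* Coprod A B)
    | true => (Coprod.inr : B →* Coprod A B)
  have h : (CoprodI.lift g).comp (toCoprodI A B) = MonoidHom.id _ := by
    apply Coprod.hom_ext
    · ext x
      exact CoprodI.lift_of g (i := false) x
    · ext x
      exact CoprodI.lift_of g (i := true) x
  exact Function.LeftInverse.injective (g := CoprodI.lift g) (DFunLike.congr_fun h)

/-- The one-letter word given by an element of the first factor. -/
def letterFst (B : Type) [Group B] (x : A) (hx : x ≠ 1) :
    CoprodI.NeWord (boolFamily A B) false false :=
  CoprodI.NeWord.singleton (M := boolFamily A B) (i := false) x hx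

/-- The one-letter word given by an element of the second factor. -/
def letterSnd (A : Type) [Group A] (y : B) (hy : y ≠ 1) :
    CoprodI.NeWord (boolFamily A B) true true :=
  CoprodI.NeWord.singleton (M := boolFamily A B) (i := true) y hy

lemma letterFst_prod (x : A) (hx : x ≠ 1) : (letterFst B x hx).prod = ofFst A B x :=
  CoprodI.NeWord.prod_singleton (M := boolFamily A B) (i := false) x hx

lemma letterSnd_prod (y : B) (hy : y ≠ 1) : (letterSnd A y hy).prod = ofSnd A B y :=
  CoprodI.NeWord.prod_singleton (M := boolFamily A B) (i := true) y hy

/-- The word `y x w`, with `y` in the second factor and `x` in the first. -/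
def prepend (y : B) (hy : y ≠ 1) (x : A) (hx : x ≠ 1)
    (w : CoprodI.NeWord (boolFamily A B) true true) :
    CoprodI.NeWord (boolFamily A B) true true :=
  (letterSnd A y hy).append Bool.false_ne_true.symm
    ((letterFst B x hx).append Bool.false_ne_true w)

lemma prepend_prod (y : B) (hy : y ≠ 1) (x : A) (hx : x ≠ 1)
    (w : CoprodI.NeWord (boolFamily A B) true true) :
    (prepend y hy x hx w).prod = ofSnd A B y * (ofFst A B x * w.prod) := by
  rw [prepend, CoprodI.NeWord.append_prod, CoprodI.NeWord.append_prod, letterFst_prod,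
    letterSnd_prod]

/-- The element `babab`. -/
def bababElt (a : A) (b : B) : CoprodI (boolFamily A B) :=
  ofSnd A B b * ofFst A B a * ofSnd A B b * ofFst A B a * ofSnd A B b

/-- The induction carries the head along: the step multiplies it by `b` to form the letter `b²`. -/
lemma babab_pow_of_sq_ne_one {a : A} {b : B} (ha : a ≠ 1) (hb : b ≠ 1) (hbb : b * b ≠ 1)
    (n : ℕ) : ∃ w : CoprodI.NeWord (boolFamily A B) true true,
      w.head = b ∧ w.prod = bababElt a b ^ (n + 1) := by
  induction n with
  | zero =>
    refine ⟨prepend b hb a ha (prepend b hb a ha (letterSnd A b hb)), rfl, ?_⟩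
    simp only [prepend_prod, letterSnd_prod, bababElt, zero_add, pow_one, mul_assoc]
  | succ n ih =>
    obtain ⟨w, hw, hp⟩ := ih
    have hne : (show boolFamily A B true from b) * w.head ≠ 1 := by
      rw [hw]
      exact hbb
    refine ⟨prepend b hb a ha (prepend b hb a ha (w.mulHead b hne)), rfl, ?_⟩
    have hm : (w.mulHead b hne).prod = ofSnd A B b * w.prod :=
      CoprodI.NeWord.mulHead_prod w _ hne
    rw [pow_succ']
    simp only [prepend_prod, hm, hp, bababElt, mul_assoc]

/-- The induction runs on the part of the reduced word after its initial `ba`, since multiplying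
`t ^ n` by `t` on the left changes that initial `a` into `a²`. -/
lemma babab_pow_of_sq_eq_one {a : A} {b : B} (ha : a ≠ 1) (hb : b ≠ 1) (hbb : b * b = 1)
    (haa : a * a ≠ 1) (n : ℕ) : ∃ w : CoprodI.NeWord (boolFamily A B) true true,
      ofSnd A B b * (ofFst A B a * w.prod) = bababElt a b ^ (n + 1) := by
  induction n with
  | zero =>
    refine ⟨prepend b hb a ha (letterSnd A b hb), ?_⟩
    simp only [prepend_prod, letterSnd_prod, bababElt, zero_add, pow_one, mul_assoc]
  | succ n ih =>
    obtain ⟨w, hp⟩ := ih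
    refine ⟨prepend b hb (a * a) haa w, ?_⟩
    have hb2 : ∀ z, ofSnd A B b * (ofSnd A B b * z) = z := fun z => by
      rw [← mul_assoc, ← map_mul, hbb, map_one, one_mul]
    rw [pow_succ', ← hp]
    simp only [prepend_prod, bababElt, mul_assoc, map_mul, hb2]

lemma babab_zpow {a : A} {b : B} (ha : a ≠ 1) (hb : b ≠ 1) (hab : b * b = 1 → a * a ≠ 1)
    (n : ℤ) (hn : n ≠ 0) : ∃ w : CoprodI.NeWord (boolFamily A B) true true,
      w.prod = bababElt a b ^ n := by
  have hpos : ∀ m : ℕ, ∃ w : CoprodI.NeWord (boolFamily A B) true true,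
      w.prod = bababElt a b ^ (m + 1) := by
    intro m
    by_cases hbb : b * b = 1
    · obtain ⟨w, hw⟩ := babab_pow_of_sq_eq_one ha hb hbb (hab hbb) m
      exact ⟨prepend b hb a ha w, (prepend_prod b hb a ha w).trans hw⟩
    · obtain ⟨w, -, hw⟩ := babab_pow_of_sq_ne_one ha hb hbb m
      exact ⟨w, hw⟩
  rcases n with (_ | m) | m
  · exact absurd rfl hn
  · obtain ⟨w, hw⟩ := hpos m
    exact ⟨w, by rw [hw]; exact (zpow_natCast _ _).symm⟩
  · obtain ⟨w, hw⟩ := hpos m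
    exact ⟨w.inv, by rw [CoprodI.NeWord.inv_prod, hw, zpow_negSucc]⟩

/-- The free-product statement for arbitrary groups in place of the cyclic ones: `A` and `babab`
generate `A * ℤ` inside `A * B`. -/
lemma lift_inl_babab_injective {a : A} {b : B} (ha : a ≠ 1) (hb : b ≠ 1)
    (hab : b * b = 1 → a * a ≠ 1) (t : Coprod A B)
    (ht : t = Coprod.inr b * Coprod.inl a * Coprod.inr b * Coprod.inl a * Coprod.inr b) :
    Function.Injective
      (Coprod.lift (Coprod.inl : A →* Coprod A B) (zpowersHom (Coprod A B) t)) := by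
  let f : ∀ i, boolFamily A (Multiplicative ℤ) i →* CoprodI (boolFamily A B) := fun i =>
    match i with
    | false => ofFst A B
    | true => zpowersHom (CoprodI (boolFamily A B)) (bababElt a b)
  have hf : Function.Injective (CoprodI.lift f) := by
    apply lift_injective_of_neWord
    rintro (_ | _) h hh
    · exact ⟨letterFst B h hh, letterFst_prod h hh⟩
    · exact babab_zpow ha hb hab (Multiplicative.toAdd (show Multiplicative ℤ from h)) hh
  have htt : toCoprodI A B t = bababElt a b := by
    subst ht
    simp [toCoprodI, bababElt]
  have hsq : (toCoprodI A B).comp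
      (Coprod.lift (Coprod.inl : A →* Coprod A B) (zpowersHom (Coprod A B) t)) =
      (CoprodI.lift f).comp (toCoprodI A (Multiplicative ℤ)) := by
    apply Coprod.hom_ext
    · ext x
      exact (CoprodI.lift_of f (i := false) x).symm
    · apply MonoidHom.ext
      intro x
      refine Eq.trans ?_ (CoprodI.lift_of f (i := true) x).symm
      change toCoprodI A B (t ^ (Multiplicative.toAdd x)) = bababElt a b ^ (Multiplicative.toAdd x)
      rw [map_zpow, htt]
  have hinj := hf.comp (toCoprodI_injective (A := A) (B := Multiplicative ℤ))
  rw [← MonoidHom.coe_comp, ← hsq, MonoidHom.coe_comp] at hinj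
  exact hinj.of_comp

end TwoFactors

/-- let `1 < q < ∞` and `1 < r ≤ ∞` with `(q, r) ≠ (2, 2)` (here `r = 0`
encodes `r = ∞`), and let `G = C_q * C_r` with canonical generators `a` and `b`. Then
`babab` has infinite order in `G`, and the subgroup `⟨a, babab⟩` is canonically isomorphic
to `C_q * C_∞`: the homomorphism `C_q * ℤ →* G` sending the canonical generators to `a`
and `babab` respectively is injective. -/
theorem subgroup_gen_by_a_babab_is_free_product (q r : ℕ) (hq : 1 < q)
    (hr : r = 0 ∨ 1 < r) (hqr : ¬ (q = 2 ∧ r = 2)) :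
    let G := Monoid.Coprod (Multiplicative (ZMod q)) (Multiplicative (ZMod r))
    let a : G := Monoid.Coprod.inl (Multiplicative.ofAdd (1 : ZMod q))
    let b : G := Monoid.Coprod.inr (Multiplicative.ofAdd (1 : ZMod r))
    ¬ IsOfFinOrder (b * a * b * a * b) ∧
    ∃ ψ : Monoid.Coprod (Multiplicative (ZMod q)) (Multiplicative ℤ) →* G,
      ψ (Monoid.Coprod.inl (Multiplicative.ofAdd (1 : ZMod q))) = a ∧
      ψ (Monoid.Coprod.inr (Multiplicative.ofAdd (1 : ℤ))) = b * a * b * a * b ∧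
      Function.Injective ψ := by
  intro G a b
  have : Fact (1 < q) := ⟨hq⟩
  have ha : Multiplicative.ofAdd (1 : ZMod q) ≠ 1 := one_ne_zero (α := ZMod q)
  have hb : Multiplicative.ofAdd (1 : ZMod r) ≠ 1 := by
    intro h
    have h1 : ((1 : ℕ) : ZMod r) = 0 := by
      rw [Nat.cast_one]
      exact h
    rw [ZMod.natCast_eq_zero_iff, Nat.dvd_one] at h1
    omega
  -- In `ZMod k` the equation `1 + 1 = 0` says `k ∣ 2`.
  have two : ∀ k : ℕ, k ≠ 1 →
      Multiplicative.ofAdd (1 : ZMod k) * Multiplicative.ofAdd (1 : ZMod k) = 1 → k = 2 := by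
    intro k hk h
    have h2 : ((2 : ℕ) : ZMod k) = 0 := by
      rw [Nat.cast_two, ← one_add_one_eq_two]
      exact h
    rw [ZMod.natCast_eq_zero_iff, Nat.dvd_prime Nat.prime_two] at h2
    exact h2.resolve_left hk
  have hab : Multiplicative.ofAdd (1 : ZMod r) * Multiplicative.ofAdd (1 : ZMod r) = 1 →
      Multiplicative.ofAdd (1 : ZMod q) * Multiplicative.ofAdd (1 : ZMod q) ≠ 1 :=
    fun h hh => hqr ⟨two q (by omega) hh, two r (by omega) h⟩
  have hinj := lift_inl_babab_injective ha hb hab (b * a * b * a * b) rfl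
  refine ⟨?_, Coprod.lift Coprod.inl (zpowersHom G (b * a * b * a * b)), ?_, ?_, hinj⟩
  · intro hfin
    obtain ⟨n, hn, hpow⟩ := isOfFinOrder_iff_pow_eq_one.mp hfin
    have h1 : (Coprod.inr (Multiplicative.ofAdd (n : ℤ)) :
        Coprod (Multiplicative (ZMod q)) (Multiplicative ℤ)) = 1 := by
      apply hinj
      rw [map_one, Coprod.lift_apply_inr, zpowersHom_apply, toAdd_ofAdd, zpow_natCast]
      exact hpow
    have h2 := congrArg (fun x => Multiplicative.toAdd (Coprod.snd x)) h1
    simp at h2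
    omega
  · exact Coprod.lift_apply_inl _ _ _
  · rw [Coprod.lift_apply_inr, zpowersHom_apply, toAdd_ofAdd, zpow_one]
end

section
/- For every odd integer n > 1 there exists a group G generated by two elements g₁, g₂ such that: G has exponent n (x^n = 1 for every x ∈ G); G is nilpotent of class at most 2; the elements [g₁, g₂] := g₁g₂g₁⁻¹g₂⁻¹, g₂, and g₁g₂^i for each i = 0, 1, …, n−1 all have order exactly n; g₁g₂g₁⁻¹ ∉ ⟨[g₁, g₂]⟩; and [g₁, g₂]^j g₁g₂g₁⁻¹ ∉ ⟨g₁g₂^i⟩ for all i, j ∈ {0, 1, …, n−1}. -/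
/-!
The group is the Heisenberg group of upper unitriangular `3 × 3` matrices over `ZMod n`, written
as triples `(a, b, c)` with `(a, b, c)(a', b', c') = (a + a', b + b', c + c' + ab')`, and
`g₁ = (1, 0, 0)`, `g₂ = (0, 1, 0)`, so that `[g₁, g₂] = (0, 0, 1)` is central.

The power formula `(a, b, c) ^ k = (ka, kb, kc + (k choose 2)ab)` (`Heis.pow_eq`) gives exponent
`n`, because `n ∣ n choose 2` for odd `n`; it also shows
that `[g₁, g₂]`, `g₂` and `g₁ g₂^i` have order exactly `n`, since their `k`-th powers have `k` as
their third, second and first coordinate respectively. The two non-membership claims are read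
off the homomorphisms `(a, b, c) ↦ a` and `(a, b, c) ↦ b`: the element `[g₁, g₂]^j g₁ g₂ g₁⁻¹`
has `a = 0` and `b = 1`, while a power of `g₁ g₂^i` has `b = i * a`, and a power of `[g₁, g₂]`
has `b = 0`.
-/

/-- The Heisenberg group over `ZMod n`; the triple `(a, b, c)` stands for the unitriangular matrix
with superdiagonal entries `a`, `b` and corner entry `c`. -/
@[ext]
structure Heis (n : ℕ) where
  a : ZMod n
  b : ZMod n
  c : ZMod n

namespace Heis

variable {n : ℕ}

instance : Mul (Heis n) := ⟨fun x y => ⟨x.a + y.a, x.b + y.b, x.c + y.c + x.a * y.b⟩⟩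
instance : One (Heis n) := ⟨⟨0, 0, 0⟩⟩
instance : Inv (Heis n) := ⟨fun x => ⟨-x.a, -x.b, -x.c + x.a * x.b⟩⟩

@[simp] lemma mul_a (x y : Heis n) : (x * y).a = x.a + y.a := rfl
@[simp] lemma mul_b (x y : Heis n) : (x * y).b = x.b + y.b := rfl
@[simp] lemma mul_c (x y : Heis n) : (x * y).c = x.c + y.c + x.a * y.b := rfl
@[simp] lemma one_a : (1 : Heis n).a = 0 := rfl
@[simp] lemma one_b : (1 : Heis n).b = 0 := rfl
@[simp] lemma one_c : (1 : Heis n).c = 0 := rfl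
@[simp] lemma inv_a (x : Heis n) : (x⁻¹).a = -x.a := rfl
@[simp] lemma inv_b (x : Heis n) : (x⁻¹).b = -x.b := rfl
@[simp] lemma inv_c (x : Heis n) : (x⁻¹).c = -x.c + x.a * x.b := rfl

instance : Group (Heis n) :=
  Group.ofLeftAxioms
    (fun x y z => by ext <;> simp <;> ring)
    (fun x => by ext <;> simp)
    (fun x => by ext <;> simp)

lemma pow_eq (x : Heis n) (k : ℕ) :
    x ^ k = ⟨k * x.a, k * x.b, k * x.c + (k.choose 2 : ℕ) * (x.a * x.b)⟩ := by
  induction k with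
  | zero => ext <;> simp
  | succ k ih =>
    rw [pow_succ, ih]
    ext
    · simp; ring
    · simp; ring
    · simp [Nat.choose_succ_succ' k 1]; ring

lemma zpow_a (x : Heis n) (k : ℤ) : (x ^ k).a = k * x.a := by
  cases k with
  | ofNat k => simp [pow_eq]
  | negSucc k => simp [zpow_negSucc, pow_eq]; ring

lemma zpow_b (x : Heis n) (k : ℤ) : (x ^ k).b = k * x.b := by
  cases k with
  | ofNat k => simp [pow_eq]
  | negSucc k => simp [zpow_negSucc, pow_eq]; ring

lemma pow_n (hodd : Odd n) (x : Heis n) : x ^ n = 1 := by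
  have h : ((n.choose 2 : ℕ) : ZMod n) = 0 := by
    obtain ⟨m, hm⟩ := hodd
    rw [ZMod.natCast_eq_zero_iff, Nat.choose_two_right]
    refine ⟨m, Nat.div_eq_of_eq_mul_left two_pos ?_⟩
    rw [show n - 1 = m * 2 by omega, mul_assoc]
  rw [pow_eq, h]
  ext <;> simp

lemma orderOf_eq (hodd : Odd n) (x : Heis n)
    (hx : ∀ k : ℕ, x ^ k = 1 → (k : ZMod n) = 0) : orderOf x = n :=
  Nat.dvd_antisymm (orderOf_dvd_of_pow_eq_one (pow_n hodd x))
    ((ZMod.natCast_eq_zero_iff _ _).1 (hx _ (pow_orderOf_eq_one x)))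

/-- The generator `g₁`. -/
def g₁ (n : ℕ) : Heis n := ⟨1, 0, 0⟩

/-- The generator `g₂`. -/
def g₂ (n : ℕ) : Heis n := ⟨0, 1, 0⟩

lemma comm_eq : g₁ n * g₂ n * (g₁ n)⁻¹ * (g₂ n)⁻¹ = ⟨0, 0, 1⟩ := by
  ext <;> simp [g₁, g₂]

lemma conj_eq : g₁ n * g₂ n * (g₁ n)⁻¹ = ⟨0, 1, 1⟩ := by
  ext <;> simp [g₁, g₂]

lemma g₁_mul_pow (i : ℕ) : g₁ n * g₂ n ^ i = ⟨1, i, i⟩ := by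
  rw [pow_eq]
  ext <;> simp [g₁, g₂]

lemma closure_eq_top [NeZero n] : Subgroup.closure ({g₁ n, g₂ n} : Set (Heis n)) = ⊤ := by
  set H := Subgroup.closure ({g₁ n, g₂ n} : Set (Heis n))
  have h₁ : g₁ n ∈ H := Subgroup.subset_closure (by simp)
  have h₂ : g₂ n ∈ H := Subgroup.subset_closure (by simp)
  have h₃ : (⟨0, 0, 1⟩ : Heis n) ∈ H := by
    rw [← comm_eq]
    exact H.mul_mem (H.mul_mem (H.mul_mem h₁ h₂) (H.inv_mem h₁)) (H.inv_mem h₂)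
  refine (Subgroup.eq_top_iff' H).2 fun x => ?_
  -- Placing `g₂` before `g₁` makes the cross term vanish.
  have hx : x = g₂ n ^ x.b.val * g₁ n ^ x.a.val * ⟨0, 0, 1⟩ ^ x.c.val := by
    simp only [pow_eq]
    ext <;> simp [g₁, g₂]
  rw [hx]
  exact H.mul_mem (H.mul_mem (H.pow_mem h₂ _) (H.pow_mem h₁ _)) (H.pow_mem h₃ _)

lemma commutator_le_center : commutator (Heis n) ≤ Subgroup.center (Heis n) := by
  rw [commutator_def, Subgroup.commutator_le]
  intro x _ y _
  rw [Subgroup.mem_center_iff]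
  intro z
  ext <;> simp [commutatorElement_def] <;> ring

end Heis

/-- for every odd `n > 1` there is a two-generated group `G = ⟨g₁, g₂⟩` of
exponent `n`, nilpotent of class at most 2 (commutator subgroup inside the center), in which
`[g₁,g₂]`, `g₂`, and `g₁g₂^i` (for `i = 0, …, n-1`) have order exactly `n`, with
`g₁g₂g₁⁻¹ ∉ ⟨[g₁,g₂]⟩` and `[g₁,g₂]^j g₁g₂g₁⁻¹ ∉ ⟨g₁g₂^i⟩` for all `i, j < n`. -/
theorem exists_nilpotent_class_two_exponent_n_group (n : ℕ) (hn : 1 < n) (hodd : Odd n) :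
    ∃ (G : Type) (_ : Group G) (g₁ g₂ : G),
      Subgroup.closure ({g₁, g₂} : Set G) = ⊤ ∧
      (∀ x : G, x ^ n = 1) ∧
      commutator G ≤ Subgroup.center G ∧
      orderOf (g₁ * g₂ * g₁⁻¹ * g₂⁻¹) = n ∧
      orderOf g₂ = n ∧
      (∀ i < n, orderOf (g₁ * g₂ ^ i) = n) ∧
      g₁ * g₂ * g₁⁻¹ ∉ Subgroup.zpowers (g₁ * g₂ * g₁⁻¹ * g₂⁻¹) ∧
      ∀ i < n, ∀ j < n,
        (g₁ * g₂ * g₁⁻¹ * g₂⁻¹) ^ j * (g₁ * g₂ * g₁⁻¹) ∉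
          Subgroup.zpowers (g₁ * g₂ ^ i) := by
  have : NeZero n := ⟨by omega⟩
  have : Fact (1 < n) := ⟨hn⟩
  refine ⟨Heis n, inferInstance, Heis.g₁ n, Heis.g₂ n, Heis.closure_eq_top, Heis.pow_n hodd,
    Heis.commutator_le_center, ?_, ?_, ?_, ?_, ?_⟩
  · rw [Heis.comm_eq]
    refine Heis.orderOf_eq hodd _ fun k hk => ?_
    simpa [Heis.pow_eq] using congrArg Heis.c hk
  · refine Heis.orderOf_eq hodd _ fun k hk => ?_
    simpa [Heis.pow_eq, Heis.g₂] using congrArg Heis.b hk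
  · intro i _
    rw [Heis.g₁_mul_pow]
    refine Heis.orderOf_eq hodd _ fun k hk => ?_
    simpa [Heis.pow_eq] using congrArg Heis.a hk
  · rw [Heis.comm_eq, Heis.conj_eq]
    rintro ⟨k, hk⟩
    simpa [Heis.zpow_b] using congrArg Heis.b hk
  · intro i _ j _
    rw [Heis.comm_eq, Heis.conj_eq, Heis.g₁_mul_pow]
    rintro ⟨k, hk⟩
    have ha : (k : ZMod n) = 0 := by
      simpa [Heis.zpow_a, Heis.pow_eq] using congrArg Heis.a hk
    simpa [Heis.zpow_b, Heis.pow_eq, ha] using congrArg Heis.b hk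
end
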